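/- Let Ω be a bounded open convex set in ℝ² containing the origin in its interior. Assume ∂Ω is C¹ and, in an arclength parametrization, the components of the unit tangent vector are absolutely continuous, so the curvature κ is defined almost everywhere as an L¹ function on ∂Ω. Assume there are a > 0 and ε > 0 with κ(x) ≥ a for almost every x ∈ ∂Ω and ∫_{∂Ω} κ (log(2+κ))^{2+ε} dσ < ∞. Then there is a constant C such that for all r ≥ 2 and h ≥ 1: S^±(r,h) ≤ C r [ h^{−1} + (log(2+r))^{−1−ε/2} ]. -/

import Mathlib

/-!
Write `X ξ` for the boundary point of `Ω` with outer unit normal `ξ`; then `ρ*(u ξ) = u ⟪X ξ, ξ⟫` for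
`u ≥ 0`.  The two hypotheses on the curvature `κ` say the following about `X`.

* Since `κ ≥ a`, the boundary is quadratically strictly convex (`local_convex`, `global_convex`), so
  `X` is a Lipschitz function of the normal (`lipschitz_of_convex`).
* The normal turns along an arc by the integral of `κ`.  Splitting `κ` at a threshold `T`
  (`split_large`) gives `‖ξ - η‖ ≤ C T ‖X ξ - X η‖ + I / log(2+T)^{2+ε}` (`normal_modulus`, which uses
  the chord-arc property `chord_arc`).

Put `ℓ = r^{1/3}` and `H = log(2+r)^{1+ε/2}`.  Lowering `h` enlarges the annulus, so one may assume
`h ≤ H`, and it is enough to find `O(r / h)` lattice points.  Cut the annulus into about `ℓ²` pieces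
over arcs of directions of length about `ℓ⁻²`.  As `X` is Lipschitz, the level curve of `ρ*` leaves
its tangent by `O(r ℓ⁻⁴) = O(1/ℓ)` only, so each piece is in a strip of length `O(ℓ)` and width
`O(1/h)` (`piece_diam`, `strip_width`).  A strip has `O(ℓ/h)` lattice points, unless they are
collinear with direction `v ∈ ℤ²`, `0 < |v| ≤ h`, and then `v` is within `O(1/ℓ)` of being
orthogonal to `X ξ`, and there are `O(ℓ/|v|)` points (`card_le_or_collinear`, `piece_dichotomy`).

The pieces of the first kind have `O(ℓ² ℓ/h) = O(r/h)` points together.  For the second kind fix `v`.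
The boundary is a Lipschitz curve in polar coordinates, so the points `X ξ` of the exceptional pieces
are within `O(1/ℓ)` of one of two points (`radial_close`).  By the modulus of continuity with
`T = √ℓ`, their normals lie in two arcs of length `O(log(2+r)^{-2-ε}) = O(H⁻²)`, which meet `O(ℓ²/H²)`
pieces (`modulus_at_scale`, `bad_count`).  The exceptional pieces thus have
`O(∑_{|v| ≤ h} (ℓ²/H²) (ℓ/|v|)) = O(r h / H²) = O(r / h)` points (`annulus_count`).
-/

open MeasureTheory Set
open scoped Pointwise RealInnerProductSpace NNReal ENNReal

noncomputable section

abbrev E2 := EuclideanSpace ℝ (Fin 2)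

/-- The embedding of an integer vector into the Euclidean plane. -/
def ek (k : Fin 2 → ℤ) : E2 := (WithLp.equiv 2 (Fin 2 → ℝ)).symm fun i => (k i : ℝ)

/-- Number of lattice points in a set. -/
def latticeCount (S : Set E2) : ℕ := Nat.card {k : Fin 2 → ℤ | ek k ∈ S}

/-- The lattice rest `E_Ω(t) = card(tΩ ∩ ℤ²) − t²·area(Ω)`. -/
def latticeRest (Ω : Set E2) (t : ℝ) : ℝ :=
  (latticeCount (t • Ω) : ℝ) - t ^ 2 * (volume Ω).toReal

/-- The mean square discrepancy `𝒢_Ω(R,h) = ((1/h)∫_R^{R+h} |E_Ω(t)|² dt)^{1/2}`. -/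
def meanSquare (Ω : Set E2) (R h : ℝ) : ℝ :=
  Real.sqrt ((1 / h) * ∫ t in R..(R + h), (latticeRest Ω t) ^ 2)

/-- The support function `ρ*(ξ) = sup {⟨x,ξ⟩ : x ∈ Ω}`. -/
def suppFn (Ω : Set E2) (ξ : E2) : ℝ := sSup ((fun x => ⟪x, ξ⟫) '' Ω)

/-- `μ(θ,δ)`, the diameter of the cap `𝒞(θ,δ) = {x ∈ ∂Ω : ⟨x,θ⟩ ≥ ρ*(θ) − δ}`. -/
def capDiam (Ω : Set E2) (θ : E2) (δ : ℝ) : ℝ :=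
  Metric.diam {x ∈ frontier Ω | suppFn Ω θ - δ ≤ ⟪x, θ⟫}

/-- Curvature bounded below in the generalized sense:
`sup_{θ∈S¹} sup_{δ>0} δ^{-1/2} μ(θ,δ) < ∞`. -/
def CurvBddBelow (Ω : Set E2) : Prop :=
  ∃ K : ℝ, ∀ θ : E2, ‖θ‖ = 1 → ∀ δ : ℝ, 0 < δ → capDiam Ω θ δ ≤ K * Real.sqrt δ

/-- `γ` is an arclength (unit-speed) parametrization of the `C¹` boundary `∂Ω`, with
period `L`, whose unit tangent vector `γ'` is absolutely continuous with almost-everywhere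
derivative `γ''`; the curvature is then `κ = ‖γ''‖`, defined a.e. as an `L¹` function. -/
def BoundaryParam (Ω : Set E2) (γ γ' γ'' : ℝ → E2) (L : ℝ) : Prop :=
  0 < L ∧ (∀ t, HasDerivAt γ (γ' t) t) ∧ Continuous γ' ∧ (∀ t, ‖γ' t‖ = 1) ∧
    Function.Periodic γ L ∧ γ '' Set.Ico 0 L = frontier Ω ∧ Set.InjOn γ (Set.Ico 0 L) ∧
    (∀ t : ℝ, IntervalIntegrable γ'' volume 0 t) ∧
    (∀ t : ℝ, γ' t = γ' 0 + ∫ s in (0:ℝ)..t, γ'' s)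

/-- `S^±(r,h)`, the number of lattice points in the annulus `{ξ : |ρ*(±ξ) − r| ≤ 1/h}`
(the sign `±` is encoded by `s = ±1`). -/
def annCount (Ω : Set E2) (s r h : ℝ) : ℕ :=
  Nat.card {k : Fin 2 → ℤ | |suppFn Ω (s • ek k) - r| ≤ 1 / h}

/-! ### Lattice points spanning small triangles -/

/-- The determinant of a pair of integer vectors. -/
def idet (u w : ℤ × ℤ) : ℤ := u.1 * w.2 - u.2 * w.1

/-- Every nonzero integer vector is a multiple of a primitive one: the integer points on the line
spanned by `v` are exactly the integer multiples of `v`. -/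
lemma exists_primitive (u : ℤ × ℤ) (hu : u ≠ 0) :
    ∃ v : ℤ × ℤ, v ≠ 0 ∧ (∃ g : ℤ, g ≠ 0 ∧ u = g • v) ∧
      ∀ w, idet v w = 0 → ∃ i : ℤ, w = i • v := by
  obtain ⟨x, y⟩ := u
  have hg : Int.gcd x y ≠ 0 := by
    intro h
    rw [Int.gcd_eq_zero_iff] at h
    exact hu (by simp [h.1, h.2])
  obtain ⟨g, x', y', hg0, hc, hx, hy⟩ := Int.exists_gcd_one' (Nat.pos_of_ne_zero hg)
  refine ⟨(x', y'), ?_, ⟨g, by exact_mod_cast hg0.ne', ?_⟩, ?_⟩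
  · rintro h
    simp only [Prod.mk_eq_zero] at h
    simp [h.1, h.2] at hc
  · ext <;> simp [hx, hy, mul_comm]
  · rintro ⟨p, q⟩ h
    simp only [idet] at h
    obtain ⟨α, β, hab⟩ := Int.isCoprime_iff_gcd_eq_one.mpr hc
    refine ⟨α * p + β * q, ?_⟩
    ext
    · simp only [Prod.smul_mk, smul_eq_mul]; linear_combination (-p) * hab - β * h
    · simp only [Prod.smul_mk, smul_eq_mul]; linear_combination (-q) * hab + α * h

lemma exists_spread (I : Finset ℤ) (hI : I.Nonempty) :
    ∃ i ∈ I, ∃ j ∈ I, (I.card : ℤ) - 1 ≤ j - i := by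
  refine ⟨I.min' hI, I.min'_mem hI, I.max' hI, I.max'_mem hI, ?_⟩
  have : I ⊆ Finset.Icc (I.min' hI) (I.max' hI) := fun x hx =>
    Finset.mem_Icc.mpr ⟨I.min'_le x hx, I.le_max' x hx⟩
  have h := Finset.card_le_card this
  have h2 := I.min'_le _ (I.max'_mem hI)
  rw [Int.card_Icc] at h
  omega

lemma card_int_le (S : Finset ℤ) (x : ℝ) (hx : 0 ≤ x)
    (hS : ∀ i ∈ S, ∀ j ∈ S, (j - i : ℝ) ≤ x) : (S.card : ℝ) ≤ x + 1 := by
  rcases S.eq_empty_or_nonempty with rfl | hne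
  · simp; linarith
  obtain ⟨i, hi, j, hj, h⟩ := exists_spread S hne
  have := hS i hi j hj
  have h' : (S.card : ℝ) - 1 ≤ j - i := by exact_mod_cast h
  linarith

/-- Lattice points all of whose triangles have area at most `T / 2`: either there are few of them,
or two of them differ by at least `card A - 1` times a nonzero integer vector `v`, which is what
happens when they are all on one line.  The proof takes a line containing the largest number `M` of
points of `A`.  Unless it contains all of `A`, one has `M - 1 ≤ T`, and `A` is covered by at most
`2 T / (M - 1) + 1` lines parallel to it, each with at most `M` points of `A`. -/
lemma card_le_or_collinear (A : Finset (ℤ × ℤ)) (T : ℝ) (hT : 0 ≤ T)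
    (hA : ∀ p ∈ A, ∀ q ∈ A, ∀ k ∈ A, |(idet (q - p) (k - p) : ℝ)| ≤ T) :
    (A.card : ℝ) ≤ 5 * T + 1 ∨
      ∃ v : ℤ × ℤ, v ≠ 0 ∧ ∃ p ∈ A, ∃ q ∈ A, ∃ i : ℤ, (A.card : ℤ) - 1 ≤ i ∧ q - p = i • v := by
  classical
  rcases Nat.lt_or_ge A.card 2 with h2 | h2
  · left
    have : (A.card : ℝ) ≤ 1 := by exact_mod_cast Nat.lt_succ_iff.mp h2
    linarith
  -- the points of `A` on the line through the two given points
  set ln : (ℤ × ℤ) × (ℤ × ℤ) → Finset (ℤ × ℤ) :=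
    fun x => A.filter fun k => idet (x.2 - x.1) (k - x.1) = 0 with hln
  have hne : A.offDiag.Nonempty := by
    obtain ⟨a, ha, b, hb, hab⟩ := Finset.one_lt_card.mp h2
    exact ⟨(a, b), Finset.mem_offDiag.mpr ⟨ha, hb, hab⟩⟩
  obtain ⟨⟨p, q⟩, hpq, hmax⟩ := Finset.exists_max_image A.offDiag (fun x => (ln x).card) hne
  obtain ⟨hp, hq, hne'⟩ := Finset.mem_offDiag.mp hpq
  simp only at hp hq hne'
  set B := ln (p, q) with hB
  have hpB : p ∈ B := Finset.mem_filter.mpr ⟨hp, by simp [idet]⟩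
  have hqB : q ∈ B := Finset.mem_filter.mpr ⟨hq, by simp [idet, mul_comm]⟩
  have hM2 : 2 ≤ B.card := Finset.one_lt_card.mpr ⟨p, hpB, q, hqB, hne'⟩
  obtain ⟨v, hv0, ⟨g, hg0, hgv⟩, hv⟩ := exists_primitive (q - p) (sub_ne_zero.mpr hne'.symm)
  have hdet : ∀ k, idet (q - p) (k - p) = g * idet v (k - p) := by
    intro k; rw [hgv]; simp only [idet, Prod.smul_fst, Prod.smul_snd, smul_eq_mul]; ring
  have hBi : ∀ k ∈ B, ∃ i : ℤ, k - p = i • v := by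
    intro k hk
    apply hv
    have := (Finset.mem_filter.mp hk).2
    simp only [hdet] at this
    exact (mul_eq_zero.mp this).resolve_left hg0
  choose! idx hidx using hBi
  have hinj : Set.InjOn idx B := by
    intro x hx y hy hxy
    have h1 := hidx x hx
    have h2 := hidx y hy
    rw [hxy, ← h2] at h1
    exact sub_left_injective h1
  obtain ⟨i₁, hi₁, i₂, hi₂, hspread⟩ := exists_spread (B.image idx) (⟨_, Finset.mem_image_of_mem idx hpB⟩)
  rw [Finset.card_image_of_injOn hinj] at hspread
  obtain ⟨p₁, hp₁, rfl⟩ := Finset.mem_image.mp hi₁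
  obtain ⟨p₂, hp₂, rfl⟩ := Finset.mem_image.mp hi₂
  have hp₁A : p₁ ∈ A := (Finset.mem_filter.mp hp₁).1
  have hp₂A : p₂ ∈ A := (Finset.mem_filter.mp hp₂).1
  have hp12 : p₂ - p₁ = (idx p₂ - idx p₁) • v := by
    rw [sub_smul, ← hidx p₂ hp₂, ← hidx p₁ hp₁]; abel
  by_cases hAB : A ⊆ B
  · right
    have : A.card ≤ B.card := Finset.card_le_card hAB
    exact ⟨v, hv0, p₁, hp₁A, p₂, hp₂A, _, by omega, hp12⟩
  left
  set M := B.card with hM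
  have hM1 : (1 : ℝ) ≤ (M : ℝ) - 1 := by
    have : (2 : ℝ) ≤ M := by exact_mod_cast hM2
    linarith
  have hgk : ∀ k ∈ A, ((M : ℝ) - 1) * |(idet v (k - p) : ℝ)| ≤ T := by
    intro k hk
    have h1 := hA p₁ hp₁A p₂ hp₂A k hk
    have h2 : idet (p₂ - p₁) (k - p₁) = (idx p₂ - idx p₁) * idet v (k - p) := by
      have h3 := hidx p₁ hp₁
      have h4 : k - p₁ = (k - p) - idx p₁ • v := by rw [← h3]; abel
      rw [hp12, h4]
      simp only [idet, Prod.smul_fst, Prod.smul_snd, smul_eq_mul, Prod.fst_sub, Prod.snd_sub]; ring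
    rw [h2] at h1
    push_cast at h1
    rw [abs_mul] at h1
    refine le_trans ?_ h1
    gcongr
    have : ((M : ℝ) - 1) ≤ (idx p₂ : ℝ) - idx p₁ := by exact_mod_cast hspread
    exact this.trans (le_abs_self _)
  obtain ⟨k₀, hk₀, hk₀B⟩ := Finset.not_subset.mp hAB
  have hMT : (M : ℝ) - 1 ≤ T := by
    have hz : idet v (k₀ - p) ≠ 0 := by
      intro h0
      exact hk₀B (Finset.mem_filter.mpr ⟨hk₀, by simp [hdet, h0]⟩)
    have h1 : (1 : ℝ) ≤ |(idet v (k₀ - p) : ℝ)| := by exact_mod_cast Int.one_le_abs hz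
    have := hgk k₀ hk₀
    nlinarith
  set f : ℤ × ℤ → ℤ := fun k => idet v (k - p) with hf
  have hfib : ∀ c ∈ A.image f, (A.filter fun x => f x = c).card ≤ M := by
    intro c _
    by_contra hcon
    push Not at hcon
    obtain ⟨x, hx, y, hy, hxy⟩ := Finset.one_lt_card.mp (show 1 < (A.filter fun x => f x = c).card by omega)
    rw [Finset.mem_filter] at hx hy
    have h1 := hmax (x, y) (Finset.mem_offDiag.mpr ⟨hx.1, hy.1, hxy⟩)
    have hyx : ∃ i : ℤ, y - x = i • v := by
      apply hv
      have := hx.2.trans hy.2.symm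
      simp only [hf, idet, Prod.fst_sub, Prod.snd_sub] at this ⊢
      linarith
    have h2 : (A.filter fun x => f x = c) ⊆ ln (x, y) := by
      intro z hz
      rw [Finset.mem_filter] at hz
      refine Finset.mem_filter.mpr ⟨hz.1, ?_⟩
      obtain ⟨i, hi⟩ := hyx
      have := hz.2.trans hx.2.symm
      simp only [hi]
      simp only [hf, idet, Prod.fst_sub, Prod.snd_sub, Prod.smul_fst, Prod.smul_snd, smul_eq_mul] at this ⊢
      linear_combination i * this
    have h3 := Finset.card_le_card h2
    change (ln (x, y)).card ≤ M at h1
    omega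
  have hcard := Finset.card_le_mul_card_image (f := f) A M hfib
  have himg : ((A.image f).card : ℝ) ≤ 2 * T / ((M : ℝ) - 1) + 1 := by
    apply card_int_le _ _ (by positivity)
    intro i hi j hj
    obtain ⟨x, hx, rfl⟩ := Finset.mem_image.mp hi
    obtain ⟨y, hy, rfl⟩ := Finset.mem_image.mp hj
    rw [le_div_iff₀ (by linarith)]
    have h1 := hgk x hx
    have h2 := hgk y hy
    have h3 := neg_abs_le (f x : ℝ)
    have h4 := le_abs_self (f y : ℝ)
    simp only [hf] at *
    nlinarith
  have hcard' : (A.card : ℝ) ≤ M * (A.image f).card := by exact_mod_cast hcard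
  calc (A.card : ℝ) ≤ M * (2 * T / ((M : ℝ) - 1) + 1) := hcard'.trans (by gcongr)
    _ = 2 * T + 2 * T / ((M : ℝ) - 1) + M := by field_simp; ring
    _ ≤ 2 * T + 2 * T + (T + 1) := by
        gcongr
        · exact div_le_self (by positivity) hM1
        · linarith
    _ = 5 * T + 1 := by ring

/-! ### Plane geometry and lattice points in strips -/

lemma inner_E2 (x y : E2) : ⟪x, y⟫ = x 0 * y 0 + x 1 * y 1 := by
  simp [PiLp.inner_apply, Fin.sum_univ_two, mul_comm]

lemma norm_sq_E2 (x : E2) : ‖x‖ ^ 2 = x 0 ^ 2 + x 1 ^ 2 := by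
  simp [EuclideanSpace.norm_sq_eq, Fin.sum_univ_two]

lemma abs_coord_le (x : E2) (i : Fin 2) : |x i| ≤ ‖x‖ := by
  simpa using PiLp.norm_apply_le x i

/-- The integer vector `p` as a vector of the Euclidean plane. -/
def zvec (p : ℤ × ℤ) : E2 := !₂[(p.1 : ℝ), (p.2 : ℝ)]

lemma zvec_sub (p q : ℤ × ℤ) : zvec (p - q) = zvec p - zvec q := by
  ext i; fin_cases i <;> simp [zvec]

lemma zvec_zsmul (i : ℤ) (p : ℤ × ℤ) : zvec (i • p) = (i : ℝ) • zvec p := by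
  ext j; fin_cases j <;> simp [zvec]

lemma zvec_ne_zero {p : ℤ × ℤ} (hp : p ≠ 0) : zvec p ≠ 0 := by
  intro h
  apply hp
  have h0 := congrArg (fun x : E2 => x 0) h
  have h1 := congrArg (fun x : E2 => x 1) h
  simp [zvec] at h0 h1
  ext <;> simp [h0, h1]

/-- The planar cross product. -/
def cross (x y : E2) : ℝ := x 0 * y 1 - x 1 * y 0

lemma cross_sq_add (x y : E2) : cross x y ^ 2 + ⟪x, y⟫ ^ 2 = ‖x‖ ^ 2 * ‖y‖ ^ 2 := by
  rw [norm_sq_E2, norm_sq_E2, inner_E2, cross]; ring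

lemma abs_cross_le (x y : E2) : |cross x y| ≤ ‖x‖ * ‖y‖ := by
  apply abs_le_of_sq_le_sq _ (by positivity)
  have := cross_sq_add x y
  nlinarith [sq_nonneg ⟪x, y⟫]

/-- Two vectors in a thin strip have a small cross product. -/
lemma cross_strip (X u w : E2) (W D : ℝ) (hu : ‖u‖ ≤ D) (hw : ‖w‖ ≤ D)
    (hXu : |⟪X, u⟫| ≤ W) (hXw : |⟪X, w⟫| ≤ W) (hX : 0 < ‖X‖) :
    |cross u w| * ‖X‖ ≤ 2 * W * D := by
  have hid : cross u w * ‖X‖ ^ 2 = ⟪X, u⟫ * cross X w - ⟪X, w⟫ * cross X u := by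
    rw [norm_sq_E2, inner_E2, inner_E2]; simp only [cross]; ring
  have hW : 0 ≤ W := (abs_nonneg _).trans hXu
  have h1 : |⟪X, u⟫ * cross X w| ≤ W * (‖X‖ * D) := by
    rw [abs_mul]
    exact mul_le_mul hXu ((abs_cross_le X w).trans (by gcongr)) (abs_nonneg _) hW
  have h2 : |⟪X, w⟫ * cross X u| ≤ W * (‖X‖ * D) := by
    rw [abs_mul]
    exact mul_le_mul hXw ((abs_cross_le X u).trans (by gcongr)) (abs_nonneg _) hW
  have h3 : |cross u w| * ‖X‖ ^ 2 ≤ 2 * (W * (‖X‖ * D)) := by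
    rw [← abs_of_nonneg (sq_nonneg ‖X‖), ← abs_mul, hid]
    exact (abs_sub _ _).trans (by linarith)
  have h4 : (|cross u w| * ‖X‖) * ‖X‖ ≤ (2 * W * D) * ‖X‖ := by nlinarith
  exact le_of_mul_le_mul_right h4 hX

/-- Lattice points in a strip of width `W / ‖X‖` and length `D`: their number is controlled by
the area, unless there is a short integer vector `v` almost parallel to the strip.  In the second
case the estimates come from two of the points, which differ by `card A - 1` or more copies
of `v`. -/
lemma strip_card (A : Finset (ℤ × ℤ)) (X : E2) (c W D : ℝ) (hc : 0 < c) (hX : c ≤ ‖X‖)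
    (hW : 0 ≤ W) (hD0 : 0 ≤ D)
    (hD : ∀ p ∈ A, ∀ q ∈ A, ‖zvec p - zvec q‖ ≤ D)
    (hXW : ∀ p ∈ A, ∀ q ∈ A, |⟪X, zvec p - zvec q⟫| ≤ W) :
    (A.card : ℝ) ≤ 10 * W * D / c + 1 ∨
      ∃ v : ℤ × ℤ, v ≠ 0 ∧ ((A.card : ℝ) - 1) * ‖zvec v‖ ≤ D ∧
        ((A.card : ℝ) - 1) * |⟪X, zvec v⟫| ≤ W := by
  have hT : ∀ p ∈ A, ∀ q ∈ A, ∀ k ∈ A, |(idet (q - p) (k - p) : ℝ)| ≤ 2 * W * D / c := by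
    intro p hp q hq k hk
    have h := cross_strip X (zvec q - zvec p) (zvec k - zvec p) W D (hD q hq p hp) (hD k hk p hp)
      (hXW q hq p hp) (hXW k hk p hp) (hc.trans_le hX)
    have he : cross (zvec q - zvec p) (zvec k - zvec p) = idet (q - p) (k - p) := by
      simp [cross, idet, zvec]
    rw [he] at h
    rw [le_div_iff₀ hc]
    exact (mul_le_mul_of_nonneg_left hX (abs_nonneg _)).trans h
  rcases card_le_or_collinear A _ (by positivity) hT with h | ⟨v, hv, p, hp, q, hq, i, hi, hqp⟩
  · left; convert h using 1; ring
  · right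
    have hi' : (A.card : ℝ) - 1 ≤ |(i : ℝ)| := by
      have : (A.card : ℝ) - 1 ≤ i := by exact_mod_cast hi
      exact this.trans (le_abs_self _)
    have he : zvec q - zvec p = (i : ℝ) • zvec v := by rw [← zvec_sub, hqp, zvec_zsmul]
    refine ⟨v, hv, ?_, ?_⟩
    · have := hD q hq p hp
      rw [he, norm_smul, Real.norm_eq_abs] at this
      exact (mul_le_mul_of_nonneg_right hi' (norm_nonneg _)).trans this
    · have := hXW q hq p hp
      rw [he, inner_smul_right, abs_mul] at this
      exact (mul_le_mul_of_nonneg_right hi' (abs_nonneg _)).trans this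

/-! ### Arcs of directions -/

/-- The coordinate of smaller absolute value. -/
def smallC (ξ : E2) : ℝ := if |ξ 0| ≤ |ξ 1| then ξ 0 else ξ 1

/-- The coordinate of larger absolute value. -/
def bigC (ξ : E2) : ℝ := if |ξ 0| ≤ |ξ 1| then ξ 1 else ξ 0

open Classical in
/-- The index of the arc of length about `1 / N` of the unit circle containing `ξ`: one of the four
quarter circles centred on the axes, and the rounded value of the smaller coordinate. -/
def dirIdx (N : ℝ) (ξ : E2) : (Bool × Bool) × ℤ :=
  ((decide (|ξ 0| ≤ |ξ 1|), decide (0 ≤ bigC ξ)), ⌊N * smallC ξ⌋)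

/-- On a quarter circle centred on an axis, the larger coordinate is a `1`-Lipschitz function of the
smaller one. -/
lemma circle_aux {s b s' b' d : ℝ} (h1 : s ^ 2 + b ^ 2 = 1) (h2 : s' ^ 2 + b' ^ 2 = 1)
    (hs : |s| ≤ |b|) (hs' : |s'| ≤ |b'|) (hb : 0 ≤ b ↔ 0 ≤ b') (hd : |s - s'| ≤ d) :
    |b - b'| ≤ d := by
  have hb0 : 0 < |b| := by
    rcases (abs_nonneg b).eq_or_lt with h | h
    · have hb' : b = 0 := abs_eq_zero.mp h.symm
      have : s = 0 := abs_eq_zero.mp (le_antisymm (h ▸ hs) (abs_nonneg _))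
      simp [hb', this] at h1
    · exact h
  have hbb : |b + b'| = |b| + |b'| := by
    by_cases h : 0 ≤ b
    · have h' := hb.mp h
      rw [abs_of_nonneg h, abs_of_nonneg h', abs_of_nonneg (by positivity)]
    · have h' : ¬ 0 ≤ b' := fun h' => h (hb.mpr h')
      push Not at h h'
      rw [abs_of_neg h, abs_of_neg h', abs_of_neg (by linarith)]; ring
  have hid : |b - b'| * |b + b'| = |s - s'| * |s + s'| := by
    rw [← abs_mul, ← abs_mul, ← abs_neg]; congr 1; linear_combination h2 - h1
  have h3 : |s + s'| ≤ |b + b'| := by rw [hbb]; exact (abs_add_le _ _).trans (by gcongr)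
  have h4 : 0 < |b + b'| := by rw [hbb]; positivity
  have h5 : |b - b'| * |b + b'| ≤ d * |b + b'| := by
    rw [hid]; exact mul_le_mul hd h3 (abs_nonneg _) ((abs_nonneg _).trans hd)
  exact le_of_mul_le_mul_right h5 h4

lemma norm_le_of_dirIdx_eq {N : ℝ} (hN : 0 < N) {ξ η : E2} (hξ : ‖ξ‖ = 1) (hη : ‖η‖ = 1)
    (h : dirIdx N ξ = dirIdx N η) : ‖ξ - η‖ ≤ 2 / N := by
  simp only [dirIdx, Prod.mk.injEq, decide_eq_decide] at h
  obtain ⟨⟨h1, h2⟩, h3⟩ := h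
  have h4 : |smallC ξ - smallC η| ≤ 1 / N := by
    have := Int.abs_sub_lt_one_of_floor_eq_floor h3
    rw [← mul_sub, abs_mul, abs_of_pos hN] at this
    rw [le_div_iff₀ hN]; linarith
  have hn1 := norm_sq_E2 ξ
  have hn2 := norm_sq_E2 η
  rw [hξ] at hn1
  rw [hη] at hn2
  have key : ∀ a b : ℝ, |a| ≤ 1 / N → |b| ≤ 1 / N → a ^ 2 + b ^ 2 ≤ (2 / N) ^ 2 := by
    intro a b ha hb
    have ha' := sq_le_sq' (abs_le.mp ha).1 (abs_le.mp ha).2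
    have hb' := sq_le_sq' (abs_le.mp hb).1 (abs_le.mp hb).2
    have : (2 / N) ^ 2 = 4 * (1 / N) ^ 2 := by ring
    nlinarith [sq_nonneg (1 / N)]
  have hsq : ‖ξ - η‖ ^ 2 ≤ (2 / N) ^ 2 := by
    rw [norm_sq_E2]
    simp only [PiLp.sub_apply]
    by_cases hc : |ξ 0| ≤ |ξ 1|
    · have hc' := h1.mp hc
      simp only [smallC, bigC, hc, hc', if_true] at h2 h4
      exact key _ _ h4 (circle_aux (by linarith) (by linarith) hc hc' h2 h4)
    · have hc' : ¬ |η 0| ≤ |η 1| := fun h => hc (h1.mpr h)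
      simp only [smallC, bigC, hc, hc', if_false] at h2 h4
      push Not at hc hc'
      exact key _ _ (circle_aux (by linarith) (by linarith) hc.le hc'.le h2 h4) h4
  exact le_of_sq_le_sq hsq (by positivity)

/-- The number of arcs met by a set of directions of diameter `m`. -/
lemma card_dirIdx_le (N m : ℝ) (hN : 0 < N) (hm : 0 ≤ m) (S : Finset ((Bool × Bool) × ℤ))
    (rep : (Bool × Bool) × ℤ → E2) (hrep : ∀ i ∈ S, dirIdx N (rep i) = i)
    (hS : ∀ i ∈ S, ∀ j ∈ S, ‖rep i - rep j‖ ≤ m) : (S.card : ℝ) ≤ 4 * (N * m + 2) := by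
  classical
  have hfib : ∀ q : Bool × Bool, ((S.filter fun i => i.1 = q).card : ℝ) ≤ N * m + 2 := by
    intro q
    have hinj : Set.InjOn (fun i : (Bool × Bool) × ℤ => i.2) (S.filter fun i => i.1 = q) := by
      intro i hi j hj hij
      have hi' := (Finset.mem_filter.mp hi).2
      have hj' := (Finset.mem_filter.mp hj).2
      exact Prod.ext (hi'.trans hj'.symm) hij
    rw [← Finset.card_image_of_injOn hinj]
    have : N * m + 2 = (N * m + 1) + 1 := by ring
    rw [this]
    apply card_int_le _ _ (by positivity)
    intro i' hi' j' hj'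
    obtain ⟨i, hi, rfl⟩ := Finset.mem_image.mp hi'
    obtain ⟨j, hj, rfl⟩ := Finset.mem_image.mp hj'
    rw [Finset.mem_filter] at hi hj
    have ei := hrep i hi.1
    have ej := hrep j hj.1
    have hd := hS j hj.1 i hi.1
    have e1 : (decide (|rep i 0| ≤ |rep i 1|) : Bool) = decide (|rep j 0| ≤ |rep j 1|) := by
      have a1 := congrArg (fun x => x.1.1) (ei)
      have a2 := congrArg (fun x => x.1.1) (ej)
      simp only [dirIdx] at a1 a2
      rw [← hj.2] at hi
      have := congrArg Prod.fst hi.2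
      rw [← a1, ← a2] at this
      simpa using this
    rw [decide_eq_decide] at e1
    have hsm : smallC (rep j) - smallC (rep i) ≤ m := by
      refine le_trans ?_ hd
      refine le_trans (le_abs_self _) ?_
      by_cases hc : |rep i 0| ≤ |rep i 1|
      · have hc' := e1.mp hc
        simp only [smallC, hc, hc', if_true]
        exact abs_coord_le (rep j - rep i) 0
      · have hc' : ¬ |rep j 0| ≤ |rep j 1| := fun h => hc (e1.mpr h)
        simp only [smallC, hc, hc', if_false]
        exact abs_coord_le (rep j - rep i) 1
    have fi : i.2 = ⌊N * smallC (rep i)⌋ := (congrArg Prod.snd ei).symm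
    have fj : j.2 = ⌊N * smallC (rep j)⌋ := (congrArg Prod.snd ej).symm
    have g1 := Int.sub_one_lt_floor (N * smallC (rep i))
    have g2 := Int.floor_le (N * smallC (rep j))
    simp only [fi, fj]
    nlinarith
  have hsum := Finset.card_eq_sum_card_fiberwise (s := S) (t := Finset.univ)
    (f := fun i : (Bool × Bool) × ℤ => i.1) (fun _ _ => by simp)
  rw [hsum]
  push_cast
  calc _ ≤ ∑ _q : Bool × Bool, (N * m + 2) := Finset.sum_le_sum fun q _ => hfib q
    _ = 4 * (N * m + 2) := by simp; ring

/-! ### The polar Lipschitz property of a convex curve -/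

/-- One half of `radial_close`: a boundary point `Y` with outer normal `ζ` bounds how far out the
nearby boundary points `Y'` can be. -/
lemma radial_aux (v Y Y' ζ : E2) (c M δ : ℝ) (hc : 0 < c) (hδ : 0 ≤ δ) (hM0 : 0 ≤ M)
    (hv : 1 ≤ ‖v‖) (hζ : ‖ζ‖ = 1) (hY : c ≤ ⟪Y, ζ⟫) (hYM : ‖Y‖ ≤ M) (hYM' : ‖Y'‖ ≤ M)
    (hYY : ⟪Y', ζ⟫ ≤ ⟪Y, ζ⟫) (hYd : |⟪Y, v⟫| ≤ δ) (hYd' : |⟪Y', v⟫| ≤ δ)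
    (hsd : 0 ≤ cross v Y ↔ 0 ≤ cross v Y') :
    |cross v Y'| - |cross v Y| ≤ ‖v‖ * (2 * M * δ / c) := by
  have hv0 : 0 < ‖v‖ := by linarith
  -- `|β| Y' - |β'| Y` is parallel to `v`, where `β`, `β'` are the components orthogonal to `v`
  have hid : (cross v Y * ⟪Y', ζ⟫ - cross v Y' * ⟪Y, ζ⟫) * ‖v‖ ^ 2
      = (cross v Y * ⟪Y', v⟫ - cross v Y' * ⟪Y, v⟫) * ⟪v, ζ⟫ := by
    rw [norm_sq_E2]; simp only [inner_E2, cross]; ring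
  have e1 : |cross v Y * ⟪Y', v⟫ - cross v Y' * ⟪Y, v⟫| ≤ 2 * (‖v‖ * M * δ) := by
    refine (abs_sub _ _).trans ?_
    rw [abs_mul, abs_mul]
    have a1 : |cross v Y| ≤ ‖v‖ * M := (abs_cross_le v Y).trans (by gcongr)
    have a2 : |cross v Y'| ≤ ‖v‖ * M := (abs_cross_le v Y').trans (by gcongr)
    have b1 := mul_le_mul a1 hYd' (abs_nonneg _) (by positivity)
    have b2 := mul_le_mul a2 hYd (abs_nonneg _) (by positivity)
    linarith
  have e2 : |⟪v, ζ⟫| ≤ ‖v‖ := by simpa [hζ] using abs_real_inner_le_norm v ζ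
  have e3 : |cross v Y * ⟪Y', ζ⟫ - cross v Y' * ⟪Y, ζ⟫| * ‖v‖ ^ 2 ≤ 2 * (‖v‖ * M * δ) * ‖v‖ := by
    rw [← abs_of_nonneg (sq_nonneg ‖v‖), ← abs_mul, hid, abs_mul]
    exact mul_le_mul e1 e2 (abs_nonneg _) (by positivity)
  have e4 : |cross v Y * ⟪Y', ζ⟫ - cross v Y' * ⟪Y, ζ⟫| ≤ 2 * M * δ := by
    have : |cross v Y * ⟪Y', ζ⟫ - cross v Y' * ⟪Y, ζ⟫| * ‖v‖ ^ 2 ≤ (2 * M * δ) * ‖v‖ ^ 2 := by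
      nlinarith
    exact le_of_mul_le_mul_right this (by positivity)
  have e5 : (|cross v Y'| - |cross v Y|) * ⟪Y, ζ⟫ ≤ 2 * M * δ := by
    have hle := (abs_le.mp e4)
    by_cases h : 0 ≤ cross v Y
    · have h' := hsd.mp h
      rw [abs_of_nonneg h, abs_of_nonneg h']
      nlinarith [mul_le_mul_of_nonneg_left hYY h]
    · have h' : ¬ 0 ≤ cross v Y' := fun h' => h (hsd.mpr h')
      push Not at h h'
      rw [abs_of_neg h, abs_of_neg h']
      nlinarith [mul_le_mul_of_nonneg_left hYY (neg_nonneg.mpr h.le)]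
  have e6 : |cross v Y'| - |cross v Y| ≤ 2 * M * δ / c := by
    rw [le_div_iff₀ hc]
    rcases le_total 0 (|cross v Y'| - |cross v Y|) with h | h
    · exact (mul_le_mul_of_nonneg_left hY h).trans e5
    · have : 0 ≤ 2 * M * δ := by positivity
      nlinarith
  have : 0 ≤ 2 * M * δ / c := by positivity
  nlinarith

/-- The boundary of a convex body is a Lipschitz graph in polar coordinates: two boundary points
`X`, `X'` with outer normals `ξ`, `ξ'`, both close to the same ray orthogonal to `v`, are close. -/
lemma radial_close (X X' ξ ξ' v : E2) (c M δ : ℝ) (hc : 0 < c) (hξ : ‖ξ‖ = 1) (hξ' : ‖ξ'‖ = 1)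
    (hX : c ≤ ⟪X, ξ⟫) (hX' : c ≤ ⟪X', ξ'⟫) (hM : ‖X‖ ≤ M) (hM' : ‖X'‖ ≤ M)
    (hs : ⟪X', ξ⟫ ≤ ⟪X, ξ⟫) (hs' : ⟪X, ξ'⟫ ≤ ⟪X', ξ'⟫) (hv : 1 ≤ ‖v‖)
    (hd : |⟪X, v⟫| ≤ δ) (hd' : |⟪X', v⟫| ≤ δ) (hside : 0 ≤ cross v X ↔ 0 ≤ cross v X') :
    ‖X - X'‖ ≤ (2 + 2 * M / c) * δ := by
  have hδ : 0 ≤ δ := (abs_nonneg _).trans hd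
  have hM0 : 0 ≤ M := (norm_nonneg _).trans hM
  have hv0 : 0 < ‖v‖ := by linarith
  have m1 := radial_aux v X X' ξ c M δ hc hδ hM0 hv hξ hX hM hM' hs hd hd' hside
  have m2 := radial_aux v X' X ξ' c M δ hc hδ hM0 hv hξ' hX' hM' hM hs' hd' hd hside.symm
  have hcr : |cross v (X - X')| ≤ ‖v‖ * (2 * M * δ / c) := by
    have h1 : cross v (X - X') = cross v X - cross v X' := by simp only [cross, PiLp.sub_apply]; ring
    rw [h1]
    by_cases h : 0 ≤ cross v X
    · have h' := hside.mp h
      rw [abs_of_nonneg h, abs_of_nonneg h'] at m1 m2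
      exact abs_le.mpr ⟨by linarith, by linarith⟩
    · have h' : ¬ 0 ≤ cross v X' := fun h' => h (hside.mpr h')
      push Not at h h'
      rw [abs_of_neg h, abs_of_neg h'] at m1 m2
      exact abs_le.mpr ⟨by linarith, by linarith⟩
  have hin : |⟪v, X - X'⟫| ≤ ‖v‖ * (2 * δ) := by
    rw [inner_sub_right, real_inner_comm, real_inner_comm X']
    have := (abs_sub ⟪X, v⟫ ⟪X', v⟫)
    nlinarith
  have hq := cross_sq_add v (X - X')
  set P := 2 * M * δ / c with hP
  have hP0 : 0 ≤ P := by positivity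
  have hfin : (‖v‖ * ‖X - X'‖) ^ 2 ≤ (‖v‖ * (2 * δ + P)) ^ 2 := by
    have a1 := sq_le_sq' (abs_le.mp hcr).1 (abs_le.mp hcr).2
    have a2 := sq_le_sq' (abs_le.mp hin).1 (abs_le.mp hin).2
    have : 0 ≤ ‖v‖ ^ 2 * (δ * P) := by positivity
    nlinarith
  have := le_of_sq_le_sq hfin (by positivity)
  have := le_of_mul_le_mul_left this hv0
  calc _ ≤ _ := this
    _ = _ := by rw [hP]; ring

/-! ### Support data and pieces of the annulus -/

/-- The data on the boundary of `Ω` used by the lattice point count.  `X ξ` is the boundary point with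
outer unit normal `ξ`, so that `u * ⟪X ξ, ξ⟫` is the value of the support function at `u • ξ` for
`u ≥ 0`.  The constants are an inner radius `c` of `Ω`, an outer radius `M`, and a Lipschitz
constant `K` of `X`, that is, an upper bound for the radius of curvature.  Nothing is required of `X`
outside the unit circle. -/
structure SupportData (X : E2 → E2) (c M K : ℝ) : Prop where
  c_pos : 0 < c
  K_nonneg : 0 ≤ K
  supp : ∀ ξ η : E2, ‖ξ‖ = 1 → ‖η‖ = 1 → ⟪X η, ξ⟫ ≤ ⟪X ξ, ξ⟫
  lower : ∀ ξ : E2, ‖ξ‖ = 1 → c ≤ ⟪X ξ, ξ⟫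
  upper : ∀ ξ : E2, ‖ξ‖ = 1 → ‖X ξ‖ ≤ M
  lip : ∀ ξ η : E2, ‖ξ‖ = 1 → ‖η‖ = 1 → ‖X ξ - X η‖ ≤ K * ‖ξ - η‖

namespace SupportData

variable {X : E2 → E2} {c M K : ℝ}

lemma M_nonneg (hX : SupportData X c M K) : 0 ≤ M := by
  have h : ‖(!₂[1, 0] : E2)‖ = 1 := by
    have := norm_sq_E2 !₂[1, 0]
    simp at this
    exact this.resolve_right fun h => by linarith [norm_nonneg (!₂[1, 0] : E2)]
  exact (norm_nonneg _).trans (hX.upper _ h)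

lemma norm_lower (hX : SupportData X c M K) {ξ : E2} (hξ : ‖ξ‖ = 1) : c ≤ ‖X ξ‖ := by
  have h1 := hX.lower ξ hξ
  have h2 := real_inner_le_norm (X ξ) ξ
  rw [hξ, mul_one] at h2
  linarith

/-- Second order contact of the level curve of the support function with its tangent line. -/
lemma tangent_dev (hX : SupportData X c M K) {ξ η : E2} (hξ : ‖ξ‖ = 1) (hη : ‖η‖ = 1) :
    |⟪X η, η⟫ - ⟪X ξ, η⟫| ≤ K * ‖ξ - η‖ ^ 2 := by
  have h1 := hX.supp η ξ hη hξ
  have h2 := hX.supp ξ η hξ hη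
  rw [abs_of_nonneg (by linarith)]
  have h3 : ⟪X ξ - X η, ξ - η⟫ ≤ ‖X ξ - X η‖ * ‖ξ - η‖ := real_inner_le_norm _ _
  have h4 := mul_le_mul_of_nonneg_right (hX.lip ξ η hξ hη) (norm_nonneg (ξ - η))
  simp only [inner_sub_left, inner_sub_right] at h3
  nlinarith

lemma val_lip (hX : SupportData X c M K) {ξ η : E2} (hξ : ‖ξ‖ = 1) (hη : ‖η‖ = 1) :
    |⟪X ξ, ξ⟫ - ⟪X η, η⟫| ≤ (K + M) * ‖ξ - η‖ := by
  have e : ⟪X ξ, ξ⟫ - ⟪X η, η⟫ = ⟪X ξ - X η, ξ⟫ + ⟪X η, ξ - η⟫ := by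
    simp only [inner_sub_left, inner_sub_right]; ring
  rw [e]
  have h1 := abs_real_inner_le_norm (X ξ - X η) ξ
  have h2 := abs_real_inner_le_norm (X η) (ξ - η)
  have h3 := hX.lip ξ η hξ hη
  have h4 := mul_le_mul_of_nonneg_right (hX.upper η hη) (norm_nonneg (ξ - η))
  rw [hξ] at h1
  have h5 := abs_add_le ⟪X ξ - X η, ξ⟫ ⟪X η, ξ - η⟫
  linarith

lemma radius_le (hX : SupportData X c M K) {ℓ h u : ℝ} (hℓ : 1 ≤ ℓ) (hh : 1 ≤ h) (hu : 0 ≤ u)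
    {η : E2} (hη : ‖η‖ = 1) (hk : |u * ⟪X η, η⟫ - ℓ ^ 3| ≤ 1 / h) : u ≤ 2 * ℓ ^ 3 / c := by
  have h1 : 1 / h ≤ 1 := by rw [div_le_one (by linarith)]; exact hh
  have h2 := (abs_le.mp hk).2
  have h3 := mul_le_mul_of_nonneg_left (hX.lower η hη) hu
  have h4 : 1 ≤ ℓ ^ 3 := one_le_pow₀ hℓ
  rw [le_div_iff₀ hX.c_pos]
  linarith

/-- The part of the annulus of radius `ℓ ^ 3` and width `1 / h` over an arc of directions of
diameter `2 / ℓ ^ 2` is contained in a strip of width `O(1 / h)`. -/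
lemma strip_width (hX : SupportData X c M K) {ℓ h C₀ u : ℝ} (hℓ : 1 ≤ ℓ) (hh : 1 ≤ h)
    (hC : h ≤ C₀ * ℓ) (hu : 0 ≤ u) {ξ η : E2} (hξ : ‖ξ‖ = 1) (hη : ‖η‖ = 1)
    (hd : ‖ξ - η‖ ≤ 2 / ℓ ^ 2) (hk : |u * ⟪X η, η⟫ - ℓ ^ 3| ≤ 1 / h) :
    |⟪X ξ, u • η⟫ - ℓ ^ 3| ≤ (1 + 8 * K * C₀ / c) / h := by
  have hc := hX.c_pos
  have hK := hX.K_nonneg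
  have h1 := hX.radius_le hℓ hh hu hη hk
  have h2 := hX.tangent_dev hξ hη
  have h3 : ‖ξ - η‖ ^ 2 ≤ (2 / ℓ ^ 2) ^ 2 := by gcongr
  have h4 : |u * ⟪X η, η⟫ - u * ⟪X ξ, η⟫| ≤ (2 * ℓ ^ 3 / c) * (K * (2 / ℓ ^ 2) ^ 2) := by
    rw [← mul_sub, abs_mul, abs_of_nonneg hu]
    exact mul_le_mul h1 (h2.trans (by gcongr)) (abs_nonneg _) (by positivity)
  have h5 : (2 * ℓ ^ 3 / c) * (K * (2 / ℓ ^ 2) ^ 2) = (8 * K / c) * (1 / ℓ) := by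
    field_simp; ring
  have h6 : 1 / ℓ ≤ C₀ / h := by
    rw [div_le_div_iff₀ (by linarith) (by linarith)]; linarith
  have h7 : (8 * K / c) * (1 / ℓ) ≤ (8 * K / c) * (C₀ / h) := by gcongr
  rw [inner_smul_right]
  calc |u * ⟪X ξ, η⟫ - ℓ ^ 3|
      = |(u * ⟪X η, η⟫ - ℓ ^ 3) - (u * ⟪X η, η⟫ - u * ⟪X ξ, η⟫)| := by congr 1; ring
    _ ≤ 1 / h + (8 * K / c) * (C₀ / h) := (abs_sub _ _).trans (by linarith)
    _ = (1 + 8 * K * C₀ / c) / h := by field_simp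

/-- The part of the annulus over an arc of directions of diameter `2 / ℓ ^ 2` has diameter
`O(ℓ)`. -/
lemma piece_diam (hX : SupportData X c M K) {ℓ h u u' : ℝ} (hℓ : 1 ≤ ℓ) (hh : 1 ≤ h)
    (hu : 0 ≤ u) {η η' : E2} (hη : ‖η‖ = 1) (hη' : ‖η'‖ = 1)
    (hd : ‖η - η'‖ ≤ 2 / ℓ ^ 2) (hk : |u * ⟪X η, η⟫ - ℓ ^ 3| ≤ 1 / h)
    (hk' : |u' * ⟪X η', η'⟫ - ℓ ^ 3| ≤ 1 / h) :
    ‖u • η - u' • η'‖ ≤ (4 / c + (2 + 4 * (K + M) / c) / c) * ℓ := by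
  have hc := hX.c_pos
  have hK := hX.K_nonneg
  have hM := hX.M_nonneg
  have h1 := hX.radius_le hℓ hh hu hη hk
  have hh1 : 1 / h ≤ 1 := by rw [div_le_one (by linarith)]; exact hh
  have e1 : u * ‖η - η'‖ ≤ (4 / c) * ℓ := by
    calc u * ‖η - η'‖ ≤ (2 * ℓ ^ 3 / c) * (2 / ℓ ^ 2) := by gcongr
      _ = (4 / c) * ℓ := by field_simp; ring
  have e2 : |u - u'| * c ≤ (2 + 4 * (K + M) / c) * ℓ := by
    have a1 : |u - u'| * c ≤ |(u - u') * ⟪X η', η'⟫| := by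
      rw [abs_mul]
      exact mul_le_mul_of_nonneg_left ((hX.lower η' hη').trans (le_abs_self _)) (abs_nonneg _)
    have a2 : (u - u') * ⟪X η', η'⟫ = ((u * ⟪X η, η⟫ - ℓ ^ 3) - (u' * ⟪X η', η'⟫ - ℓ ^ 3))
        - u * (⟪X η, η⟫ - ⟪X η', η'⟫) := by ring
    have a3 : |u * (⟪X η, η⟫ - ⟪X η', η'⟫)| ≤ (K + M) * ((4 / c) * ℓ) := by
      rw [abs_mul, abs_of_nonneg hu]
      have := mul_le_mul_of_nonneg_left (hX.val_lip hη hη') hu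
      have h0 : 0 ≤ K + M := by positivity
      nlinarith
    have a4 := abs_sub ((u * ⟪X η, η⟫ - ℓ ^ 3) - (u' * ⟪X η', η'⟫ - ℓ ^ 3))
      (u * (⟪X η, η⟫ - ⟪X η', η'⟫))
    have a5 := abs_sub (u * ⟪X η, η⟫ - ℓ ^ 3) (u' * ⟪X η', η'⟫ - ℓ ^ 3)
    rw [← a2] at a4
    have a6 : (2 + 4 * (K + M) / c) * ℓ = 2 * ℓ + (K + M) * ((4 / c) * ℓ) := by ring
    rw [a6]
    linarith
  have e3 : |u - u'| ≤ ((2 + 4 * (K + M) / c) / c) * ℓ := by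
    rw [div_mul_eq_mul_div, le_div_iff₀ hc]; exact e2
  have e4 : u • η - u' • η' = u • (η - η') + (u - u') • η' := by
    rw [smul_sub, sub_smul]; abel
  rw [e4]
  refine (norm_add_le _ _).trans ?_
  rw [norm_smul, norm_smul, hη', Real.norm_of_nonneg hu, Real.norm_eq_abs, mul_one]
  linarith

end SupportData

lemma le_norm_zvec_of_mem_box {v : ℤ × ℤ} {m : ℕ} (hv : v ∈ Finset.box m) :
    (m : ℝ) ≤ ‖zvec v‖ := by
  rw [Int.mem_box] at hv
  have h0 := abs_coord_le (zvec v) 0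
  have h1 := abs_coord_le (zvec v) 1
  simp only [zvec, PiLp.toLp_apply, Matrix.cons_val_zero, Matrix.cons_val_one] at h0 h1
  rw [← hv]
  have e0 : ((v.1.natAbs : ℕ) : ℝ) = |(v.1 : ℝ)| := by simp [Nat.cast_natAbs]
  have e1 : ((v.2.natAbs : ℕ) : ℝ) = |(v.2 : ℝ)| := by simp [Nat.cast_natAbs]
  push_cast
  rw [max_le_iff]
  constructor
  · simpa [zvec] using h0
  · simpa [zvec] using h1

/-- A piece of the annulus has `O(ℓ / h)` lattice points, unless its tangent is within
`O(1 / ℓ)` of the direction of an integer vector `v` of size `m ≤ h`. -/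
lemma piece_dichotomy (A : Finset (ℤ × ℤ)) (X : E2) (c W₀ D₀ C₀ ℓ h : ℝ) (hc : 0 < c)
    (hX : c ≤ ‖X‖) (hW : 0 ≤ W₀) (hD0 : 0 ≤ D₀) (hC₀ : 0 ≤ C₀) (hℓ : 1 ≤ ℓ) (hh : 1 ≤ h)
    (hC : h ≤ C₀ * ℓ)
    (hD : ∀ p ∈ A, ∀ q ∈ A, ‖zvec p - zvec q‖ ≤ D₀ * ℓ)
    (hXW : ∀ p ∈ A, ∀ q ∈ A, |⟪X, zvec p - zvec q⟫| ≤ W₀ / h) :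
    (A.card : ℝ) ≤ (10 * W₀ * D₀ / c + C₀ + D₀ + 1) * (ℓ / h) ∨
      ∃ m ∈ Finset.Icc 1 ⌊h⌋₊, ∃ v ∈ (Finset.box m : Finset (ℤ × ℤ)),
        |⟪X, zvec v⟫| ≤ W₀ / ℓ ∧ (A.card : ℝ) ≤ (C₀ + D₀) * (ℓ / m) := by
  have hh0 : 0 < h := by linarith
  have hℓ0 : 0 < ℓ := by linarith
  have hone : 1 ≤ C₀ * (ℓ / h) := by
    rw [← mul_div_assoc, le_div_iff₀ hh0]; linarith
  have hq : 0 < ℓ / h := by positivity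
  have hWD : 0 ≤ 10 * W₀ * D₀ / c := by positivity
  rcases strip_card A X c (W₀ / h) (D₀ * ℓ) hc hX (by positivity) (by positivity) hD hXW with
    hcard | ⟨v, hv, h1, h2⟩
  · left
    have : 10 * (W₀ / h) * (D₀ * ℓ) / c = 10 * W₀ * D₀ / c * (ℓ / h) := by field_simp
    nlinarith [mul_nonneg hD0 hq.le]
  obtain ⟨m, hm, -⟩ := Int.existsUnique_mem_box v
  have hm0 : m ≠ 0 := by
    rintro rfl
    exact hv (by simpa using hm)
  have hm1 : (1 : ℝ) ≤ m := by exact_mod_cast Nat.one_le_iff_ne_zero.mpr hm0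
  have hmv := le_norm_zvec_of_mem_box hm
  by_cases hsmall : (A.card : ℝ) - 1 ≤ ℓ / h
  · left
    nlinarith [mul_nonneg hD0 hq.le, mul_nonneg hWD hq.le]
  push Not at hsmall
  have hcm : (A.card : ℝ) - 1 ≤ D₀ * (ℓ / m) := by
    rw [← mul_div_assoc, le_div_iff₀ (by linarith)]
    nlinarith
  by_cases hmh : (m : ℝ) ≤ h
  · right
    refine ⟨m, Finset.mem_Icc.mpr ⟨by omega, Nat.le_floor hmh⟩, v, hm, ?_, ?_⟩
    · have h3 : ℓ / h * |⟪X, zvec v⟫| ≤ W₀ / h :=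
        (mul_le_mul_of_nonneg_right hsmall.le (abs_nonneg _)).trans h2
      rw [le_div_iff₀ hℓ0]
      rw [div_mul_eq_mul_div, div_le_div_iff_of_pos_right hh0] at h3
      linarith
    · have : ℓ / h ≤ ℓ / m := by gcongr
      nlinarith [mul_le_mul_of_nonneg_left this hC₀]
  · left
    push Not at hmh
    have : ℓ / m ≤ ℓ / h := by gcongr
    nlinarith [mul_le_mul_of_nonneg_left this hD0, mul_nonneg hWD hq.le]

/-! ### The lattice point count -/

/-- The direction of an integer vector. -/
def zdir (k : ℤ × ℤ) : E2 := ‖zvec k‖⁻¹ • zvec k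

lemma norm_zdir {k : ℤ × ℤ} (hk : k ≠ 0) : ‖zdir k‖ = 1 := by
  have := norm_ne_zero_iff.mpr (zvec_ne_zero hk)
  rw [zdir, norm_smul, norm_inv, norm_norm, inv_mul_cancel₀ this]

lemma smul_zdir {k : ℤ × ℤ} (hk : k ≠ 0) : ‖zvec k‖ • zdir k = zvec k := by
  have := norm_ne_zero_iff.mpr (zvec_ne_zero hk)
  rw [zdir, smul_smul, mul_inv_cancel₀ this, one_smul]

/-- The number of arcs of directions whose tangent is within `O(1 / ℓ)` of `zvec v` is controlled by
the modulus of continuity of the normal. -/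
lemma bad_count {X : E2 → E2} {c M K : ℝ} (hX : SupportData X c M K) {W₀ C₀ Cω ℓ H : ℝ}
    (hℓ : 1 ≤ ℓ) (hH : 0 < H) (hHℓ : H ≤ C₀ * ℓ) (hCω : 0 ≤ Cω)
    (hmod : ∀ ξ η : E2, ‖ξ‖ = 1 → ‖η‖ = 1 → ‖X ξ - X η‖ ≤ (2 + 2 * M / c) * W₀ / ℓ →
      ‖ξ - η‖ ≤ Cω / H ^ 2)
    (v : E2) (hv : 1 ≤ ‖v‖) (S : Finset ((Bool × Bool) × ℤ)) (rep : (Bool × Bool) × ℤ → E2)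
    (hrep : ∀ i ∈ S, dirIdx (ℓ ^ 2) (rep i) = i) (hunit : ∀ i ∈ S, ‖rep i‖ = 1)
    (hS : ∀ i ∈ S, |⟪X (rep i), v⟫| ≤ W₀ / ℓ) :
    (S.card : ℝ) ≤ 8 * (Cω + 2 * C₀ ^ 2) * (ℓ ^ 2 / H ^ 2) := by
  classical
  -- the two rays orthogonal to `v` are treated separately
  have half : ∀ S' ⊆ S, (∀ i ∈ S', ∀ j ∈ S', 0 ≤ cross v (X (rep i)) ↔ 0 ≤ cross v (X (rep j))) →
      (S'.card : ℝ) ≤ 4 * (ℓ ^ 2 * (Cω / H ^ 2) + 2) := by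
    intro S' hS' hside
    refine card_dirIdx_le _ _ (by positivity) (by positivity) S' rep
      (fun i hi => hrep i (hS' hi)) fun i hi j hj => ?_
    have ui := hunit i (hS' hi)
    have uj := hunit j (hS' hj)
    refine hmod _ _ ui uj ?_
    rw [mul_div_assoc]
    exact radial_close _ _ (rep i) (rep j) v c M _ hX.c_pos ui uj (hX.lower _ ui) (hX.lower _ uj)
      (hX.upper _ ui) (hX.upper _ uj) (hX.supp _ _ ui uj) (hX.supp _ _ uj ui) hv
      (hS i (hS' hi)) (hS j (hS' hj)) (hside i hi j hj)
  have h1 := half (S.filter fun i => 0 ≤ cross v (X (rep i))) (Finset.filter_subset _ _) (by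
    intro i hi j hj
    simp [(Finset.mem_filter.mp hi).2, (Finset.mem_filter.mp hj).2])
  have h2 := half (S.filter fun i => ¬ 0 ≤ cross v (X (rep i))) (Finset.filter_subset _ _) (by
    intro i hi j hj
    simp only [(Finset.mem_filter.mp hi).2, (Finset.mem_filter.mp hj).2])
  have h3 : ((S.filter fun i => 0 ≤ cross v (X (rep i))).card : ℝ)
      + (S.filter fun i => ¬ 0 ≤ cross v (X (rep i))).card = S.card := by
    exact_mod_cast Finset.card_filter_add_card_filter_not _
  have h4 : 1 ≤ C₀ ^ 2 * (ℓ ^ 2 / H ^ 2) := by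
    rw [← mul_div_assoc, le_div_iff₀ (by positivity), one_mul, ← mul_pow]
    gcongr
  have h5 : ℓ ^ 2 * (Cω / H ^ 2) = Cω * (ℓ ^ 2 / H ^ 2) := by ring
  rw [h5] at h1 h2
  linarith

/-- The lattice point count in the annulus of radius `ℓ ^ 3` and width `1 / h`.  The annulus is cut
into about `ℓ ^ 2` pieces of length about `ℓ`.  Pieces whose tangent is not close to a short integer
vector contribute `O(ℓ / h)` each.  For an integer vector `v` of size `m ≤ h`, there are
`O(ℓ ^ 2 / H ^ 2)` pieces with tangent close to `v`, each with `O(ℓ / m)` points. -/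
lemma annulus_count {X : E2 → E2} {c M K : ℝ} (hX : SupportData X c M K) (Hf : ℝ → ℝ) (C₀ : ℝ)
    (hH : ∀ ℓ, 1 ≤ ℓ → Hf ℓ ≤ C₀ * ℓ)
    (hmod : ∀ B : ℝ, ∃ C : ℝ, ∀ ℓ, 1 ≤ ℓ → ∀ ξ η : E2, ‖ξ‖ = 1 → ‖η‖ = 1 →
      ‖X ξ - X η‖ ≤ B / ℓ → ‖ξ - η‖ ≤ C / (Hf ℓ) ^ 2) :
    ∃ C : ℝ, 0 ≤ C ∧ ∀ ℓ h : ℝ, 1 ≤ ℓ → 1 ≤ h → h ≤ Hf ℓ → ∀ P : Finset (ℤ × ℤ),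
      (∀ k ∈ P, k ≠ 0 ∧ |‖zvec k‖ * ⟪X (zdir k), zdir k⟫ - ℓ ^ 3| ≤ 1 / h) →
      (P.card : ℝ) ≤ C * (ℓ ^ 3 / h) := by
  classical
  have hc := hX.c_pos
  have hK := hX.K_nonneg
  have hM := hX.M_nonneg
  set C₁ := max C₀ 0 with hC₁
  have hC₁0 : 0 ≤ C₁ := le_max_right _ _
  set W₀ := 2 * (1 + 8 * K * C₁ / c) with hW₀
  have hW : 0 ≤ W₀ := by positivity
  set D₀ := 4 / c + (2 + 4 * (K + M) / c) / c with hD₀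
  have hD : 0 ≤ D₀ := by positivity
  obtain ⟨Cω', hCω'⟩ := hmod ((2 + 2 * M / c) * W₀)
  set Cω := max Cω' 0 with hCωd
  have hCω0 : 0 ≤ Cω := le_max_right _ _
  set C₃ := 10 * W₀ * D₀ / c + C₁ + D₀ + 1 with hC₃
  have hC₃0 : 0 ≤ C₃ := by positivity
  set C₄ := C₁ + D₀ with hC₄
  have hC₄0 : 0 ≤ C₄ := by positivity
  set C₆ := 8 * (Cω + 2 * C₁ ^ 2) with hC₆
  have hC₆0 : 0 ≤ C₆ := by positivity
  refine ⟨16 * C₃ + 8 * C₄ * C₆, by positivity, ?_⟩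
  intro ℓ h hℓ hh hhH P hP
  set H := Hf ℓ with hHd
  have hℓ0 : 0 < ℓ := by linarith
  have hh0 : 0 < h := by linarith
  have hH0 : 0 < H := by linarith
  have hHℓ : H ≤ C₁ * ℓ := (hH ℓ hℓ).trans (by gcongr; exact le_max_left _ _)
  have hhℓ : h ≤ C₁ * ℓ := hhH.trans hHℓ
  set ι : ℤ × ℤ → (Bool × Bool) × ℤ := fun k => dirIdx (ℓ ^ 2) (zdir k) with hι
  set I := P.image ι with hI
  have hrep : ∀ i ∈ I, ∃ k ∈ P, ι k = i := fun i hi => Finset.mem_image.mp hi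
  choose! kk hkk using hrep
  set rep : (Bool × Bool) × ℤ → E2 := fun i => zdir (kk i) with hrepd
  have hunit : ∀ i ∈ I, ‖rep i‖ = 1 := fun i hi => norm_zdir (hP _ (hkk i hi).1).1
  have hridx : ∀ i ∈ I, dirIdx (ℓ ^ 2) (rep i) = i := fun i hi => (hkk i hi).2
  have hdich : ∀ i ∈ I, ((P.filter fun k => ι k = i).card : ℝ) ≤ C₃ * (ℓ / h) ∨
      ∃ m ∈ Finset.Icc 1 ⌊h⌋₊, ∃ v ∈ (Finset.box m : Finset (ℤ × ℤ)),
        |⟪X (rep i), zvec v⟫| ≤ W₀ / ℓ ∧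
          ((P.filter fun k => ι k = i).card : ℝ) ≤ C₄ * (ℓ / m) := by
    intro i hi
    have ui := hunit i hi
    refine piece_dichotomy _ _ c W₀ D₀ C₁ ℓ h hc (hX.norm_lower ui) hW hD hC₁0 hℓ hh hhℓ ?_ ?_
    · intro p hp q hq
      obtain ⟨hp, hpi⟩ := Finset.mem_filter.mp hp
      obtain ⟨hq, hqi⟩ := Finset.mem_filter.mp hq
      have hp0 := (hP p hp).1
      have hq0 := (hP q hq).1
      rw [← smul_zdir hp0, ← smul_zdir hq0]
      exact hX.piece_diam hℓ hh (norm_nonneg _) (norm_zdir hp0) (norm_zdir hq0)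
        (norm_le_of_dirIdx_eq (by positivity) (norm_zdir hp0) (norm_zdir hq0) (hpi.trans hqi.symm))
        (hP p hp).2 (hP q hq).2
    · have hone : ∀ p ∈ P.filter fun k => ι k = i,
          |⟪X (rep i), zvec p⟫ - ℓ ^ 3| ≤ (1 + 8 * K * C₁ / c) / h := by
        intro p hp
        obtain ⟨hp, hpi⟩ := Finset.mem_filter.mp hp
        have hp0 := (hP p hp).1
        have := hX.strip_width hℓ hh hhℓ (norm_nonneg _) ui (norm_zdir hp0)
          (norm_le_of_dirIdx_eq (by positivity) ui (norm_zdir hp0) ((hridx i hi).trans hpi.symm))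
          (hP p hp).2
        rwa [smul_zdir hp0] at this
      intro p hp q hq
      have e : ⟪X (rep i), zvec p - zvec q⟫
          = (⟪X (rep i), zvec p⟫ - ℓ ^ 3) - (⟪X (rep i), zvec q⟫ - ℓ ^ 3) := by
        rw [inner_sub_right]; ring
      rw [e]
      have e2 : W₀ / h = (1 + 8 * K * C₁ / c) / h + (1 + 8 * K * C₁ / c) / h := by
        rw [hW₀]; ring
      rw [e2]
      exact (abs_sub _ _).trans (add_le_add (hone p hp) (hone q hq))
  -- both alternatives are summed at once, with the second one weighted by an indicator function
  set F : (Bool × Bool) × ℤ → ℕ → ℤ × ℤ → ℝ := fun i m v =>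
    if |⟪X (rep i), zvec v⟫| ≤ W₀ / ℓ then C₄ * (ℓ / m) else 0 with hF
  have hF0 : ∀ i m v, 0 ≤ F i m v := by
    intro i m v; simp only [hF]; split_ifs <;> positivity
  have hpiece : ∀ i ∈ I, ((P.filter fun k => ι k = i).card : ℝ) ≤
      C₃ * (ℓ / h) + ∑ m ∈ Finset.Icc 1 ⌊h⌋₊, ∑ v ∈ (Finset.box m : Finset (ℤ × ℤ)), F i m v := by
    intro i hi
    rcases hdich i hi with h1 | ⟨m, hm, v, hv, hb, hcard⟩
    · refine h1.trans (le_add_of_nonneg_right ?_)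
      exact Finset.sum_nonneg fun m _ => Finset.sum_nonneg fun v _ => hF0 i m v
    · have e1 : F i m v ≤ ∑ v ∈ (Finset.box m : Finset (ℤ × ℤ)), F i m v :=
        Finset.single_le_sum (f := fun v => F i m v) (fun v _ => hF0 i m v) hv
      have e2 : ∑ v ∈ (Finset.box m : Finset (ℤ × ℤ)), F i m v ≤
          ∑ m ∈ Finset.Icc 1 ⌊h⌋₊, ∑ v ∈ (Finset.box m : Finset (ℤ × ℤ)), F i m v :=
        Finset.single_le_sum (f := fun m => ∑ v ∈ (Finset.box m : Finset (ℤ × ℤ)), F i m v)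
          (fun m _ => Finset.sum_nonneg fun v _ => hF0 i m v) hm
      have e3 : F i m v = C₄ * (ℓ / m) := by simp only [hF, hb, if_true]
      have : 0 ≤ C₃ * (ℓ / h) := by positivity
      linarith
  have hIcard : (I.card : ℝ) ≤ 16 * ℓ ^ 2 := by
    have h1 := card_dirIdx_le (ℓ ^ 2) 2 (by positivity) (by norm_num) I rep hridx (by
      intro i hi j hj
      refine (norm_sub_le _ _).trans ?_
      rw [hunit i hi, hunit j hj]; norm_num)
    have : 1 ≤ ℓ ^ 2 := one_le_pow₀ hℓ
    linarith
  have hbad : ∀ m ∈ Finset.Icc 1 ⌊h⌋₊, ∀ v ∈ (Finset.box m : Finset (ℤ × ℤ)),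
      ∑ i ∈ I, F i m v ≤ C₆ * (ℓ ^ 2 / H ^ 2) * (C₄ * (ℓ / m)) := by
    intro m hm v hv
    simp only [hF]
    rw [← Finset.sum_filter, Finset.sum_const, nsmul_eq_mul]
    gcongr
    have hm1 : (1 : ℝ) ≤ m := by exact_mod_cast (Finset.mem_Icc.mp hm).1
    refine bad_count hX hℓ hH0 hHℓ hCω0 ?_ (zvec v) (hm1.trans (le_norm_zvec_of_mem_box hv)) _ rep
      (fun i hi => hridx i (Finset.mem_filter.mp hi).1)
      (fun i hi => hunit i (Finset.mem_filter.mp hi).1) (fun i hi => (Finset.mem_filter.mp hi).2)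
    intro ξ η hξ hη hle
    refine (hCω' ℓ hℓ ξ η hξ hη hle).trans ?_
    gcongr
    exact le_max_left _ _
  have hsum := Finset.card_eq_sum_card_image ι P
  have hm_sum : ∀ m ∈ Finset.Icc 1 ⌊h⌋₊, ∑ v ∈ (Finset.box m : Finset (ℤ × ℤ)),
      C₆ * (ℓ ^ 2 / H ^ 2) * (C₄ * (ℓ / m)) = 8 * C₄ * C₆ * (ℓ ^ 3 / H ^ 2) := by
    intro m hm
    have hm0 : m ≠ 0 := by have := (Finset.mem_Icc.mp hm).1; omega
    rw [Finset.sum_const, Int.card_box hm0, nsmul_eq_mul]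
    have : (m : ℝ) ≠ 0 := by exact_mod_cast hm0
    push_cast
    field_simp
  calc (P.card : ℝ) = ∑ i ∈ I, ((P.filter fun k => ι k = i).card : ℝ) := by
        rw [hsum]; push_cast; rfl
    _ ≤ ∑ i ∈ I, (C₃ * (ℓ / h) + ∑ m ∈ Finset.Icc 1 ⌊h⌋₊,
          ∑ v ∈ (Finset.box m : Finset (ℤ × ℤ)), F i m v) := Finset.sum_le_sum hpiece
    _ = I.card * (C₃ * (ℓ / h)) + ∑ m ∈ Finset.Icc 1 ⌊h⌋₊,
          ∑ v ∈ (Finset.box m : Finset (ℤ × ℤ)), ∑ i ∈ I, F i m v := by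
        rw [Finset.sum_add_distrib, Finset.sum_const, nsmul_eq_mul, Finset.sum_comm]
        congr 1
        exact Finset.sum_congr rfl fun m _ => Finset.sum_comm
    _ ≤ (16 * ℓ ^ 2) * (C₃ * (ℓ / h)) + ∑ m ∈ Finset.Icc 1 ⌊h⌋₊,
          8 * C₄ * C₆ * (ℓ ^ 3 / H ^ 2) := by
        gcongr with m hm
        rw [← hm_sum m hm]
        exact Finset.sum_le_sum fun v hv => hbad m hm v hv
    _ = 16 * C₃ * (ℓ ^ 3 / h) + 8 * C₄ * C₆ * (ℓ ^ 3 * (⌊h⌋₊ / H ^ 2)) := by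
        rw [Finset.sum_const, Nat.card_Icc, nsmul_eq_mul]
        simp only [Nat.add_sub_cancel]
        ring
    _ ≤ 16 * C₃ * (ℓ ^ 3 / h) + 8 * C₄ * C₆ * (ℓ ^ 3 * (1 / h)) := by
        have hfl : (⌊h⌋₊ : ℝ) / H ^ 2 ≤ 1 / h := by
          rw [div_le_div_iff₀ (by positivity) hh0]
          have := Nat.floor_le hh0.le
          nlinarith
        gcongr
    _ = (16 * C₃ + 8 * C₄ * C₆) * (ℓ ^ 3 / h) := by ring

/-! ### The outer normal along the boundary -/

/-- In the plane, the vectors orthogonal to `τ` are the multiples of one unit normal `n`. -/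
lemma perp_eq {τ n w : E2} (hτ : ‖τ‖ = 1) (hn : ‖n‖ = 1) (hnτ : ⟪n, τ⟫ = 0) (hwτ : ⟪w, τ⟫ = 0) :
    w = ⟪w, n⟫ • n := by
  have h1 : cross w n * ‖τ‖ ^ 2 = ⟪w, τ⟫ * cross τ n - ⟪n, τ⟫ * cross τ w := by
    rw [norm_sq_E2, inner_E2, inner_E2]; simp only [cross]; ring
  have h2 : cross w n = 0 := by simpa [hτ, hnτ, hwτ] using h1
  have h3 := cross_sq_add w n
  rw [h2, hn] at h3
  have h4 : ‖w - ⟪w, n⟫ • n‖ ^ 2 = 0 := by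
    rw [@norm_sub_sq ℝ, inner_smul_right, norm_smul, hn]
    simp only [RCLike.re_to_real, Real.norm_eq_abs, mul_one, sq_abs]
    nlinarith
  exact sub_eq_zero.mp (norm_eq_zero.mp (pow_eq_zero_iff two_ne_zero |>.mp h4))

lemma normal_unique {τ n w x : E2} (hτ : ‖τ‖ = 1) (hn : ‖n‖ = 1) (hnτ : ⟪n, τ⟫ = 0)
    (hw : ‖w‖ = 1) (hwτ : ⟪w, τ⟫ = 0) (hnx : 0 < ⟪n, x⟫) (hwx : 0 < ⟪w, x⟫) : w = n := by
  have h := perp_eq hτ hn hnτ hwτ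
  have h1 : |⟪w, n⟫| = 1 := by
    have := congrArg norm h
    rw [norm_smul, hw, hn, mul_one] at this
    exact this.symm
  have h2 : 0 < ⟪w, n⟫ := by
    rw [h, inner_smul_left] at hwx
    simp only [conj_trivial] at hwx
    exact pos_of_mul_pos_left hwx hnx.le
  rw [abs_of_pos h2] at h1
  rw [h, h1, one_smul]

/-- Every boundary point has a supporting line, at distance at least `c` from the origin when `Ω`
contains the disc of radius `c`. -/
lemma exists_normal {Ω : Set E2} (hconv : Convex ℝ Ω) (hopen : IsOpen Ω) {c : ℝ}
    (hc : 0 ≤ c) (hball : Metric.closedBall 0 c ⊆ Ω) {x : E2} (hx : x ∈ frontier Ω) :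
    ∃ w : E2, ‖w‖ = 1 ∧ (∀ y ∈ closure Ω, ⟪w, y⟫ ≤ ⟪w, x⟫) ∧ c ≤ ⟪w, x⟫ := by
  have hxΩ : x ∉ Ω := by
    rw [hopen.frontier_eq] at hx; exact hx.2
  obtain ⟨f, hf⟩ := geometric_hahn_banach_open_point hconv hopen hxΩ
  set w' := (InnerProductSpace.toDual ℝ E2).symm f with hw'
  have hfw : ∀ y, f y = ⟪w', y⟫ := fun y => by rw [hw', InnerProductSpace.toDual_symm_apply]
  have h0Ω : (0 : E2) ∈ Ω := hball (by simpa using hc)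
  have hw0 : w' ≠ 0 := by
    intro h
    have := hf 0 h0Ω
    rw [hfw, hfw, h] at this
    simp at this
  have hn : 0 < ‖w'‖ := norm_pos_iff.mpr hw0
  have hmain : ∀ y ∈ Ω, ⟪‖w'‖⁻¹ • w', y⟫ ≤ ⟪‖w'‖⁻¹ • w', x⟫ := by
    intro y hy
    have := hf y hy
    rw [hfw, hfw] at this
    rw [inner_smul_left, inner_smul_left]
    simp only [conj_trivial]
    exact mul_le_mul_of_nonneg_left this.le (by positivity)
  have hunit : ‖‖w'‖⁻¹ • w'‖ = 1 := by
    rw [norm_smul, norm_inv, norm_norm, inv_mul_cancel₀ hn.ne']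
  refine ⟨‖w'‖⁻¹ • w', hunit, ?_, ?_⟩
  · intro y hy
    refine closure_minimal (s := Ω) (t := {y | ⟪‖w'‖⁻¹ • w', y⟫ ≤ ⟪‖w'‖⁻¹ • w', x⟫}) hmain ?_ hy
    exact isClosed_le (by fun_prop) (by fun_prop)
  · have := hmain (c • (‖w'‖⁻¹ • w')) (hball (by
      rw [mem_closedBall_zero_iff, norm_smul, hunit, Real.norm_of_nonneg hc, mul_one]))
    rw [inner_smul_right, real_inner_self_eq_norm_sq, hunit] at this
    linarith

lemma perp_of_max {γ : ℝ → E2} {t : ℝ} {τ w : E2} (hd : HasDerivAt γ τ t)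
    (hmax : ∀ s, ⟪w, γ s⟫ ≤ ⟪w, γ t⟫) : ⟪w, τ⟫ = 0 := by
  have h1 : HasDerivAt (fun s => ⟪w, γ s⟫) ⟪w, τ⟫ t := by
    simpa using (hasDerivAt_const t w).inner ℝ hd
  have h2 : IsLocalMax (fun s => ⟪w, γ s⟫) t := Filter.Eventually.of_forall hmax
  exact h2.hasDerivAt_eq_zero h1

/-- `n` is the field of outer unit normals along the boundary curve `γ` with tangent `γ'`, and `c` is a
lower bound for the distance of the tangent lines from the origin.  The field `dist` says that the
normal turns as much as the tangent. -/
structure NormalField (Ω : Set E2) (γ γ' n : ℝ → E2) (c : ℝ) : Prop where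
  c_pos : 0 < c
  unit : ∀ t, ‖n t‖ = 1
  perp : ∀ t, ⟪n t, γ' t⟫ = 0
  supp : ∀ t, ∀ y ∈ closure Ω, ⟪n t, y⟫ ≤ ⟪n t, γ t⟫
  lower : ∀ t, c ≤ ⟪n t, γ t⟫
  dist : ∀ s t, ‖n s - n t‖ = ‖γ' s - γ' t‖

lemma BoundaryParam.mem_frontier {Ω : Set E2} {γ γ' γ'' : ℝ → E2} {L : ℝ}
    (hbp : BoundaryParam Ω γ γ' γ'' L) (t : ℝ) : γ t ∈ frontier Ω := by
  obtain ⟨hL, -, -, -, hper, himg, -⟩ := hbp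
  rw [← himg]
  obtain ⟨s, hs, hst⟩ := hper.exists_mem_Ico₀ hL t
  exact ⟨s, hs, hst.symm⟩

/-- The outer normal is the rotation of the tangent by a right angle, with a sign which does not
depend on the point because the curve is connected. -/
lemma exists_normalField {Ω : Set E2} (hconv : Convex ℝ Ω) (hopen : IsOpen Ω)
    (h0 : (0 : E2) ∈ Ω) {γ γ' γ'' : ℝ → E2} {L : ℝ} (hbp : BoundaryParam Ω γ γ' γ'' L) :
    ∃ n c, NormalField Ω γ γ' n c := by
  have hmem := hbp.mem_frontier
  obtain ⟨hL, hd, hcont, hunit, -, -, -, -, -⟩ := hbp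
  obtain ⟨c, hc, hball⟩ := Metric.nhds_basis_closedBall.mem_iff.mp (hopen.mem_nhds h0)
  have hγc : Continuous γ := continuous_iff_continuousAt.mpr fun t => (hd t).continuousAt
  set rot : ℝ → E2 := fun t => !₂[-(γ' t 1), γ' t 0] with hrot
  have hsq : ∀ t, (γ' t 0) ^ 2 + (γ' t 1) ^ 2 = 1 := fun t => by
    rw [← norm_sq_E2, hunit t, one_pow]
  have hru : ∀ t, ‖rot t‖ = 1 := fun t => by
    have h1 : ‖rot t‖ ^ 2 = 1 ^ 2 := by
      rw [norm_sq_E2]; simp [hrot]; linarith [hsq t]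
    exact (sq_eq_sq₀ (norm_nonneg _) zero_le_one).mp h1
  have hrp : ∀ t, ⟪rot t, γ' t⟫ = 0 := fun t => by
    rw [inner_E2]; simp [hrot]; ring
  have hex : ∀ t, ∃ w : E2, ‖w‖ = 1 ∧ (∀ y ∈ closure Ω, ⟪w, y⟫ ≤ ⟪w, γ t⟫) ∧ c ≤ ⟪w, γ t⟫ ∧
      ⟪w, γ' t⟫ = 0 := fun t => by
    obtain ⟨w, h1, h2, h3⟩ := exists_normal hconv hopen hc.le hball (hmem t)
    exact ⟨w, h1, h2, h3, perp_of_max (hd t) fun s => h2 _ (hmem s).1⟩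
  have hne : ∀ t, ⟪rot t, γ t⟫ ≠ 0 := fun t h => by
    obtain ⟨w, h1, h2, h3, h4⟩ := hex t
    rw [perp_eq (hunit t) (hru t) (hrp t) h4, inner_smul_left, h] at h3
    simp at h3
    linarith
  have hφc : Continuous fun t => ⟪rot t, γ t⟫ := by
    have hc0 : Continuous fun t => γ' t 0 := (EuclideanSpace.proj (𝕜 := ℝ) (0 : Fin 2)).continuous.comp hcont
    have hc1 : Continuous fun t => γ' t 1 := (EuclideanSpace.proj (𝕜 := ℝ) (1 : Fin 2)).continuous.comp hcont
    have hd0 : Continuous fun t => γ t 0 := (EuclideanSpace.proj (𝕜 := ℝ) (0 : Fin 2)).continuous.comp hγc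
    have hd1 : Continuous fun t => γ t 1 := (EuclideanSpace.proj (𝕜 := ℝ) (1 : Fin 2)).continuous.comp hγc
    simp only [inner_E2, hrot]
    simp
    fun_prop
  -- the orientation of the curve is constant
  obtain ⟨σ, hσ, hpos⟩ : ∃ σ : ℝ, |σ| = 1 ∧ ∀ t, 0 < ⟪σ • rot t, γ t⟫ := by
    by_cases h : ∀ t, 0 < ⟪rot t, γ t⟫
    · exact ⟨1, by simp, fun t => by simpa using h t⟩
    · push Not at h
      obtain ⟨t₀, ht₀⟩ := h
      refine ⟨-1, by simp, fun t => ?_⟩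
      rw [inner_smul_left]
      simp only [conj_trivial, neg_mul, one_mul, neg_pos]
      by_contra hcon
      push Not at hcon
      obtain ⟨s, hs⟩ := mem_range_of_exists_le_of_exists_ge hφc ⟨t₀, ht₀⟩ ⟨t, hcon⟩
      exact hne s hs
  have hnu : ∀ t, ‖σ • rot t‖ = 1 := fun t => by
    rw [norm_smul, hru, Real.norm_eq_abs, hσ, one_mul]
  have hnp : ∀ t, ⟪σ • rot t, γ' t⟫ = 0 := fun t => by
    rw [inner_smul_left, hrp, mul_zero]
  have hall : ∀ t, (∀ y ∈ closure Ω, ⟪σ • rot t, y⟫ ≤ ⟪σ • rot t, γ t⟫) ∧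
      c ≤ ⟪σ • rot t, γ t⟫ := fun t => by
    obtain ⟨w, h1, h2, h3, h4⟩ := hex t
    have := normal_unique (hunit t) (hnu t) (hnp t) h1 h4 (hpos t) (hc.trans_le h3)
    rw [← this]
    exact ⟨h2, h3⟩
  refine ⟨fun t => σ • rot t, c, hc, hnu, hnp, fun t => (hall t).1, fun t => (hall t).2, ?_⟩
  intro s t
  rw [← smul_sub, norm_smul, Real.norm_eq_abs, hσ, one_mul]
  rw [← sq_eq_sq₀ (norm_nonneg _) (norm_nonneg _), norm_sq_E2, norm_sq_E2]
  simp [hrot]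
  ring

/-! ### The derivative of the tangent -/

/-- `g` is an exactly `L`-periodic version of the derivative of the tangent `γ'`. -/
structure TangentDeriv (γ' g : ℝ → E2) (L : ℝ) : Prop where
  periodic : Function.Periodic g L
  hasDeriv : ∀ᵐ t, HasDerivAt γ' (g t) t
  integrable : ∀ s t : ℝ, IntervalIntegrable g volume s t
  ftc : ∀ s t : ℝ, γ' t - γ' s = ∫ u in s..t, g u

lemma BoundaryParam.tangent_periodic {Ω : Set E2} {γ γ' γ'' : ℝ → E2} {L : ℝ}
    (hbp : BoundaryParam Ω γ γ' γ'' L) : Function.Periodic γ' L := by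
  obtain ⟨hL, hd, -, -, hper, -⟩ := hbp
  intro t
  have h1 : HasDerivAt (fun u => γ (u + L)) (γ' (t + L)) t := (hd (t + L)).comp_add_const t L
  have h2 : (fun u => γ (u + L)) = γ := funext hper
  rw [h2] at h1
  exact h1.unique (hd t)

/-- Almost everywhere, `γ''` is the derivative of the periodic function `γ'`; so it agrees almost
everywhere with a periodic function. -/
lemma BoundaryParam.exists_tangentDeriv {Ω : Set E2} {γ γ' γ'' : ℝ → E2} {L : ℝ}
    (hbp : BoundaryParam Ω γ γ' γ'' L) :
    ∃ g, TangentDeriv γ' g L ∧ g =ᵐ[volume] γ'' := by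
  have hper' := hbp.tangent_periodic
  obtain ⟨hL, hd, hcont, hunit, hper, himg, hinj, hintegr, hftc⟩ := hbp
  have hintegr' : ∀ s t : ℝ, IntervalIntegrable γ'' volume s t := fun s t => (hintegr s).symm.trans (hintegr t)
  have hloc : LocallyIntegrable γ'' volume := by
    rw [locallyIntegrable_iff]
    intro k hk
    obtain ⟨R, hR⟩ := hk.isBounded.subset_closedBall 0
    rw [Real.closedBall_eq_Icc] at hR
    by_cases hR0 : 0 - R ≤ 0 + R
    · exact ((intervalIntegrable_iff_integrableOn_Icc_of_le hR0).mp (hintegr' _ _)).mono_set hR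
    · rw [Icc_eq_empty hR0, subset_empty_iff] at hR
      rw [hR]; exact integrableOn_empty
  have hae : ∀ᵐ t, HasDerivAt γ' (γ'' t) t := by
    filter_upwards [_root_.LocallyIntegrable.ae_hasDerivAt_integral hloc] with t ht
    have : γ' = fun t => γ' 0 + ∫ s in (0:ℝ)..t, γ'' s := funext hftc
    rw [this]
    exact (ht 0).const_add _
  have hg : deriv γ' =ᵐ[volume] γ'' := by
    filter_upwards [hae] with t ht using ht.deriv
  refine ⟨deriv γ', ⟨?_, ?_, ?_, ?_⟩, hg⟩
  · intro t
    have h2 : (fun u => γ' (u + L)) = γ' := funext hper'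
    rw [← deriv_comp_add_const, h2]
  · filter_upwards [hae] with t ht
    rw [ht.deriv]; exact ht
  · intro s t
    exact (hintegr' s t).congr_ae (hg.symm.filter_mono (ae_mono Measure.restrict_le_self))
  · intro s t
    rw [intervalIntegral.integral_congr_ae (g := γ'') (by filter_upwards [hg] with x hx _ using hx)]
    rw [hftc t, hftc s, ← intervalIntegral.integral_add_adjacent_intervals (hintegr s) (hintegr' s t)]
    abel

lemma ae_of_periodic {L : ℝ} (hL : 0 < L) {P : ℝ → Prop}
    (hP : ∀ t, P (t + L) ↔ P t)
    (h : ∀ᵐ t ∂(volume.restrict (Icc 0 L)), P t) : ∀ᵐ t : ℝ, P t := by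
  have h1 := (ae_restrict_iff' measurableSet_Icc).mp h
  have h2 : ∀ᵐ t : ℝ, ∀ m : ℤ, t + m * L ∈ Icc 0 L → P (t + m * L) := by
    rw [ae_all_iff]
    intro m
    exact (measurePreserving_add_right volume ((m : ℝ) * L)).quasiMeasurePreserving.ae h1
  have hper : ∀ (m : ℤ) t, P (t + m * L) ↔ P t := by
    have hp : Function.Periodic P L := fun t => propext (hP t)
    intro m t
    exact iff_of_eq (hp.int_mul m t)
  filter_upwards [h2] with t ht
  have h3 := (existsUnique_add_zsmul_mem_Ico hL t 0).exists
  obtain ⟨m, hm⟩ := h3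
  rw [zero_add, zsmul_eq_mul] at hm
  exact (hper m t).mp (ht m ⟨hm.1, hm.2.le⟩)

/-- Where the tangent is differentiable, its derivative points along the inner normal. -/
lemma curvature_eq {Ω : Set E2} {γ γ' n : ℝ → E2} {c : ℝ} (hd : ∀ t, HasDerivAt γ (γ' t) t)
    (hunit : ∀ t, ‖γ' t‖ = 1) (hcl : ∀ t, γ t ∈ closure Ω)
    (hn : NormalField Ω γ γ' n c) {t : ℝ} {v : E2} (hv : HasDerivAt γ' v t) :
    v = -(‖v‖ • n t) := by
  have hvτ : ⟪v, γ' t⟫ = 0 := by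
    have h1 := hv.inner ℝ hv
    have h2 : (fun u => (⟪γ' u, γ' u⟫ : ℝ)) = fun _ => 1 := by
      funext u; rw [real_inner_self_eq_norm_sq, hunit, one_pow]
    rw [h2] at h1
    have h3 := h1.unique (hasDerivAt_const t (1 : ℝ))
    rw [real_inner_comm v (γ' t)] at h3
    have h4 : (⟪γ' t, v⟫ : ℝ) = 0 := by linarith [real_inner_comm v (γ' t)]
    rw [real_inner_comm]; exact h4
  have hψ : ∀ u, HasDerivAt (fun s => (⟪n t, γ s⟫ : ℝ)) ⟪n t, γ' u⟫ u := fun u => by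
    simpa using (hasDerivAt_const u (n t)).inner ℝ (hd u)
  have hφ : HasDerivAt (fun s => (⟪n t, γ' s⟫ : ℝ)) ⟪n t, v⟫ t := by
    simpa using (hasDerivAt_const t (n t)).inner ℝ hv
  have hdψ : deriv (fun s => (⟪n t, γ s⟫ : ℝ)) = fun s => ⟪n t, γ' s⟫ := funext fun u => (hψ u).deriv
  have hle : (⟪n t, v⟫ : ℝ) ≤ 0 := by
    by_contra hcon
    push Not at hcon
    have h1 : IsLocalMin (fun s => (⟪n t, γ s⟫ : ℝ)) t := by
      apply isLocalMin_of_deriv_deriv_pos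
      · rw [hdψ, hφ.deriv]; exact hcon
      · rw [hdψ]; exact hn.perp t
      · exact (hψ t).continuousAt
    -- a local minimum at the global maximum forces the function to be locally constant
    have h2 : (fun s => (⟪n t, γ s⟫ : ℝ)) =ᶠ[nhds t] fun _ => ⟪n t, γ t⟫ := by
      filter_upwards [h1] with s hs
      exact le_antisymm (hn.supp t _ (hcl s)) hs
    have h3 : deriv (fun s => (⟪n t, γ s⟫ : ℝ)) =ᶠ[nhds t] fun _ => 0 := by
      refine h2.deriv.trans ?_
      simp
    rw [hdψ] at h3
    have h4 := h3.deriv_eq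
    rw [hφ.deriv] at h4
    simp at h4
    exact hcon.ne' h4
  have h5 := perp_eq (hunit t) (hn.unit t) (hn.perp t) hvτ
  have h6 : ‖v‖ = |(⟪v, n t⟫ : ℝ)| := by
    conv_lhs => rw [h5]
    rw [norm_smul, hn.unit, mul_one, Real.norm_eq_abs]
  rw [real_inner_comm] at hle
  rw [abs_of_nonpos hle] at h6
  rw [h6, neg_smul, neg_neg]
  exact h5

/-! ### The chord-arc property -/

lemma BoundaryParam.continuous {Ω : Set E2} {γ γ' γ'' : ℝ → E2} {L : ℝ}
    (hbp : BoundaryParam Ω γ γ' γ'' L) : Continuous γ :=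
  continuous_iff_continuousAt.mpr fun t => (hbp.2.1 t).continuousAt

lemma exists_shift {L : ℝ} (hL : 0 < L) (t : ℝ) : ∃ m : ℤ, t + m * L ∈ Ico 0 L := by
  obtain ⟨m, hm⟩ := (existsUnique_add_zsmul_mem_Ico hL t 0).exists
  rw [zero_add, zsmul_eq_mul] at hm
  exact ⟨m, hm⟩

lemma uniform_of_periodic {f : ℝ → E2} {L : ℝ} (hL : 0 < L) (hf : Continuous f)
    (hper : Function.Periodic f L) {δ : ℝ} (hδ : 0 < δ) :
    ∃ η > 0, ∀ s t, |s - t| ≤ η → ‖f s - f t‖ ≤ δ := by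
  have huc : UniformContinuousOn f (Icc (-1) (L + 1)) :=
    isCompact_Icc.uniformContinuousOn_of_continuous hf.continuousOn
  obtain ⟨η, hη, h⟩ := Metric.uniformContinuousOn_iff.mp huc δ hδ
  refine ⟨min (η / 2) 1, by positivity, fun s t hst => ?_⟩
  obtain ⟨m, hm⟩ := exists_shift hL t
  have h1 := abs_le.mp (hst.trans (min_le_right _ _))
  have h2 := h (s + m * L) ⟨by linarith [hm.1], by linarith [hm.2]⟩ (t + m * L)
    ⟨by linarith [hm.1], by linarith [hm.2]⟩ (by
      rw [Real.dist_eq, add_sub_add_right_eq_sub]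
      have := hst.trans (min_le_left _ _); linarith)
  rw [hper.int_mul m s, hper.int_mul m t, dist_eq_norm] at h2
  exact h2.le

/-- As long as the tangent turns by at most `1 / 2`, arc and chord are comparable. -/
lemma local_chord {γ γ' : ℝ → E2} (hd : ∀ t, HasDerivAt γ (γ' t) t) (hunit : ∀ t, ‖γ' t‖ = 1)
    {η : ℝ} (hη : ∀ s t, |s - t| ≤ η → ‖γ' s - γ' t‖ ≤ 1 / 2) {s t : ℝ} (hst : |s - t| ≤ η) :
    |s - t| ≤ 2 * ‖γ s - γ t‖ := by
  have h1 := Convex.norm_image_sub_le_of_norm_hasDerivWithin_le (s := Icc (t - η) (t + η))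
    (f := fun u => γ u - u • γ' t) (f' := fun u => γ' u - (1 : ℝ) • γ' t) (C := 1 / 2) (x := t) (y := s)
    (fun u _ => ((hd u).sub ((hasDerivAt_id u).smul_const (γ' t))).hasDerivWithinAt)
    (fun u hu => by
      rw [one_smul]
      exact hη u t (abs_le.mpr ⟨by linarith [hu.1], by linarith [hu.2]⟩))
    (convex_Icc _ _)
    (by have := (abs_nonneg _).trans hst; constructor <;> linarith)
    (by have := abs_le.mp hst; constructor <;> linarith)
  have h2 : (s - t) • γ' t = (γ s - γ t) - (γ s - s • γ' t - (γ t - t • γ' t)) := by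
    rw [sub_smul]; abel
  have h3 := norm_sub_le (γ s - γ t) (γ s - s • γ' t - (γ t - t • γ' t))
  rw [← h2, norm_smul, hunit, mul_one, Real.norm_eq_abs] at h3
  rw [Real.norm_eq_abs] at h1
  linarith

/-- Points of the curve that are close in the plane have close parameters, modulo the period. -/
lemma param_close {Ω : Set E2} {γ γ' γ'' : ℝ → E2} {L : ℝ}
    (hbp : BoundaryParam Ω γ γ' γ'' L) {η : ℝ} (hη : 0 < η) :
    ∃ d > 0, ∀ s t, ‖γ s - γ t‖ < d → ∃ m : ℤ, |s + m * L - t| ≤ η := by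
  have hγc := hbp.continuous
  obtain ⟨hL, hd, hcont, hunit, hper, himg, hinj, -, -⟩ := hbp
  set K : Set (ℝ × ℝ) := (Icc 0 L ×ˢ Icc 0 L) ∩
    {p | η ≤ |p.1 - p.2| ∧ η ≤ |p.1 + L - p.2| ∧ η ≤ |p.1 - L - p.2|} with hK
  have hKc : IsCompact K := by
    refine (isCompact_Icc.prod isCompact_Icc).inter_right ?_
    have h1 : ∀ f : ℝ × ℝ → ℝ, Continuous f → IsClosed {p | η ≤ |f p|} := fun f hf =>
      isClosed_le continuous_const hf.abs
    exact (h1 (fun p => p.1 - p.2) (by fun_prop)).inter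
      ((h1 (fun p => p.1 + L - p.2) (by fun_prop)).inter (h1 (fun p => p.1 - L - p.2) (by fun_prop)))
  have hpos : ∀ p ∈ K, 0 < ‖γ p.1 - γ p.2‖ := by
    rintro ⟨s, t⟩ ⟨⟨hs, ht⟩, h1, h2, h3⟩
    simp only at hs ht h1 h2 h3 ⊢
    rw [norm_pos_iff, sub_ne_zero]
    intro heq
    have hL0 : γ L = γ 0 := by simpa using hper 0
    have e1 : η ≤ 0 → False := fun h => by linarith
    rcases hs.2.eq_or_lt with hsL | hsL <;> rcases ht.2.eq_or_lt with htL | htL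
    · subst hsL; subst htL; simp at h1; exact e1 h1
    · subst hsL
      rw [hL0] at heq
      have := hinj ⟨le_rfl, hL⟩ ⟨ht.1, htL⟩ heq
      rw [← this] at h3; simp at h3; exact e1 h3
    · subst htL
      rw [hL0] at heq
      have := hinj ⟨hs.1, hsL⟩ ⟨le_rfl, hL⟩ heq
      rw [this] at h2; simp at h2; exact e1 h2
    · have := hinj ⟨hs.1, hsL⟩ ⟨ht.1, htL⟩ heq
      rw [this] at h1; simp at h1; exact e1 h1
  obtain ⟨d, hd0, hdK⟩ : ∃ d > 0, ∀ p ∈ K, d ≤ ‖γ p.1 - γ p.2‖ :=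
    hKc.exists_forall_le' (Continuous.continuousOn (by fun_prop)) hpos
  refine ⟨d, hd0, fun s t hst => ?_⟩
  obtain ⟨i, hi⟩ := exists_shift hL s
  obtain ⟨j, hj⟩ := exists_shift hL t
  by_contra hcon
  push Not at hcon
  have hmem : (s + i * L, t + j * L) ∈ K := by
    refine ⟨⟨⟨hi.1, hi.2.le⟩, ⟨hj.1, hj.2.le⟩⟩, ?_, ?_, ?_⟩
    · have := hcon (i - j)
      push_cast at this
      rw [show s + (i - j) * L - t = s + i * L - (t + j * L) by ring] at this
      exact this.le
    · have := hcon (i - j + 1)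
      push_cast at this
      rw [show s + (i - j + 1) * L - t = s + i * L + L - (t + j * L) by ring] at this
      exact this.le
    · have := hcon (i - j - 1)
      push_cast at this
      rw [show s + (i - j - 1) * L - t = s + i * L - L - (t + j * L) by ring] at this
      exact this.le
  have := hdK _ hmem
  simp only at this
  rw [hper.int_mul i s, hper.int_mul j t] at this
  linarith

/-- The chord-arc property of the boundary curve: modulo the period, the distance of the parameters
is bounded by a multiple of the distance of the points. -/
lemma chord_arc {Ω : Set E2} {γ γ' γ'' : ℝ → E2} {L : ℝ}
    (hbp : BoundaryParam Ω γ γ' γ'' L) :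
    ∃ C > 0, ∀ s t, ∃ m : ℤ, |s + m * L - t| ≤ L ∧ |s + m * L - t| ≤ C * ‖γ s - γ t‖ := by
  obtain ⟨η, hη, hη'⟩ := uniform_of_periodic hbp.1 hbp.2.2.1 hbp.tangent_periodic
    (show (0 : ℝ) < 1 / 2 by norm_num)
  obtain ⟨d, hd0, hclose⟩ := param_close hbp (lt_min hη hbp.1)
  obtain ⟨hL, hd, hcont, hunit, hper, -⟩ := hbp
  refine ⟨max 2 (L / d), by positivity, fun s t => ?_⟩
  by_cases h : ‖γ s - γ t‖ < d
  · obtain ⟨m, hm⟩ := hclose s t h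
    have := local_chord hd hunit hη' (hm.trans (min_le_left _ _))
    rw [hper.int_mul m s] at this
    exact ⟨m, hm.trans (min_le_right _ _),
      this.trans (mul_le_mul_of_nonneg_right (le_max_left _ _) (norm_nonneg _))⟩
  · push Not at h
    obtain ⟨m, hm⟩ := exists_shift hL (s - t)
    refine ⟨m, ?_⟩
    rw [show s + m * L - t = s - t + m * L by ring, abs_of_nonneg hm.1]
    refine ⟨hm.2.le, ?_⟩
    calc s - t + m * L ≤ L := hm.2.le
      _ = L / d * d := by field_simp
      _ ≤ L / d * ‖γ s - γ t‖ := by gcongr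
      _ ≤ _ := by gcongr; exact le_max_right _ _

/-! ### Quadratic strict convexity -/

lemma inner_unit_eq {u v : E2} (hu : ‖u‖ = 1) (hv : ‖v‖ = 1) :
    (⟪u, v⟫ : ℝ) = 1 - ‖u - v‖ ^ 2 / 2 := by
  rw [@norm_sub_sq ℝ, hu, hv]
  simp only [RCLike.re_to_real]
  ring

/-- Near `t`, the component of the tangent along the normal `n t` decreases at rate `a / 2` at
least. -/
lemma inner_tangent_sub_le {Ω : Set E2} {γ γ' g n : ℝ → E2} {L c a η : ℝ}
    (hd : ∀ t, HasDerivAt γ (γ' t) t) (hunit : ∀ t, ‖γ' t‖ = 1) (hcl : ∀ t, γ t ∈ closure Ω)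
    (hn : NormalField Ω γ γ' n c) (hg : TangentDeriv γ' g L) (ha : 0 < a)
    (hlow : ∀ᵐ t, a ≤ ‖g t‖) (hη : ∀ s t, |s - t| ≤ η → ‖γ' s - γ' t‖ ≤ 1 / 2)
    {t x y : ℝ} (hxy : x ≤ y) (hx : t - η ≤ x) (hy : y ≤ t + η) :
    ⟪n t, γ' y - γ' x⟫ ≤ -(a / 2) * (y - x) := by
  have h1 : (⟪n t, γ' y - γ' x⟫ : ℝ) = ∫ u in x..y, (⟪n t, g u⟫ : ℝ) := by
    rw [hg.ftc x y]
    have := (innerSL ℝ (n t)).intervalIntegral_comp_comm (hg.integrable x y)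
    simpa using this.symm
  have hi : IntervalIntegrable (fun u => (⟪n t, g u⟫ : ℝ)) volume x y := by
    have := (hg.integrable x y)
    constructor
    · exact (innerSL ℝ (n t)).integrable_comp this.1
    · exact (innerSL ℝ (n t)).integrable_comp this.2
  have h2 : ∫ u in x..y, (⟪n t, g u⟫ : ℝ) ≤ ∫ u in x..y, (-(a / 2)) := by
    refine intervalIntegral.integral_mono_ae_restrict hxy hi (by simp) ?_
    rw [Filter.EventuallyLE, ae_restrict_iff' measurableSet_Icc]
    filter_upwards [hlow, hg.hasDeriv] with u hu hu' hmem
    have h3 := curvature_eq hd hunit hcl hn hu'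
    have h4 : (1 : ℝ) / 2 ≤ ⟪n t, n u⟫ := by
      rw [inner_unit_eq (hn.unit t) (hn.unit u), hn.dist]
      have := hη t u (abs_le.mpr ⟨by linarith [hmem.2], by linarith [hmem.1]⟩)
      nlinarith [norm_nonneg (γ' t - γ' u)]
    rw [h3, inner_neg_right, inner_smul_right]
    nlinarith [norm_nonneg (g u)]
  rw [h1]
  refine h2.trans (le_of_eq ?_)
  rw [intervalIntegral.integral_const, smul_eq_mul]; ring

/-- Curvature at least `a` makes the curve bend away from its tangent quadratically. -/
lemma local_convex {Ω : Set E2} {γ γ' g n : ℝ → E2} {L c a η : ℝ}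
    (hd : ∀ t, HasDerivAt γ (γ' t) t) (hunit : ∀ t, ‖γ' t‖ = 1) (hcl : ∀ t, γ t ∈ closure Ω)
    (hn : NormalField Ω γ γ' n c) (hg : TangentDeriv γ' g L) (ha : 0 < a)
    (hlow : ∀ᵐ t, a ≤ ‖g t‖) (hη : ∀ s t, |s - t| ≤ η → ‖γ' s - γ' t‖ ≤ 1 / 2)
    {s t : ℝ} (hst : |s - t| ≤ η) :
    a / 4 * (s - t) ^ 2 ≤ ⟪n t, γ t - γ s⟫ := by
  have hη0 : 0 ≤ η := (abs_nonneg _).trans hst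
  set ψ : ℝ → ℝ := fun u => ⟪n t, γ u⟫ + a / 4 * (u - t) ^ 2 with hψ
  have hder : ∀ u, HasDerivAt ψ (⟪n t, γ' u⟫ + a / 2 * (u - t)) u := fun u => by
    have h1 : HasDerivAt (fun s => (⟪n t, γ s⟫ : ℝ)) ⟪n t, γ' u⟫ u := by
      simpa using (hasDerivAt_const u (n t)).inner ℝ (hd u)
    have h2 : HasDerivAt (fun u => a / 4 * (u - t) ^ 2) (a / 2 * (u - t)) u := by
      have := (((hasDerivAt_id u).sub_const t).pow 2).const_mul (a / 4)
      refine this.congr_deriv ?_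
      norm_num
      ring
    exact h1.add h2
  have hcont : Continuous ψ := continuous_iff_continuousAt.mpr fun u => (hder u).continuousAt
  have hdiff : Differentiable ℝ ψ := fun u => (hder u).differentiableAt
  have key : ψ s ≤ ψ t := by
    rcases le_total t s with h | h
    · have hanti : AntitoneOn ψ (Icc t (t + η)) := by
        refine antitoneOn_of_deriv_nonpos (convex_Icc _ _) hcont.continuousOn
          hdiff.differentiableOn fun u hu => ?_
        rw [interior_Icc] at hu
        rw [(hder u).deriv]
        have := inner_tangent_sub_le hd hunit hcl hn hg ha hlow hη (t := t) hu.1.le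
          (by linarith) hu.2.le
        rw [inner_sub_right, hn.perp t] at this
        linarith
      have := abs_le.mp hst
      exact hanti ⟨le_rfl, by linarith⟩ ⟨h, by linarith⟩ h
    · have hmono : MonotoneOn ψ (Icc (t - η) t) := by
        refine monotoneOn_of_deriv_nonneg (convex_Icc _ _) hcont.continuousOn
          hdiff.differentiableOn fun u hu => ?_
        rw [interior_Icc] at hu
        rw [(hder u).deriv]
        have := inner_tangent_sub_le hd hunit hcl hn hg ha hlow hη (t := t) hu.2.le
          hu.1.le (by linarith)
        rw [inner_sub_right, hn.perp t] at this
        linarith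
      have := abs_le.mp hst
      exact hmono ⟨by linarith, h⟩ ⟨by linarith, le_rfl⟩ h
  simp only [hψ] at key
  rw [inner_sub_right]
  simp at key
  linarith

/-- A nonzero linear functional has no maximum point in an open set. -/
lemma notMem_of_max {Ω : Set E2} (hopen : IsOpen Ω) {w z : E2} (hw : ‖w‖ = 1)
    (hmax : ∀ y ∈ closure Ω, ⟪w, y⟫ ≤ ⟪w, z⟫) : z ∉ Ω := by
  intro hz
  obtain ⟨δ, hδ, hball⟩ := Metric.nhds_basis_closedBall.mem_iff.mp (hopen.mem_nhds hz)
  have h1 : z + δ • w ∈ Ω := hball (by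
    rw [Metric.mem_closedBall, dist_eq_norm, add_sub_cancel_left, norm_smul, hw, mul_one,
      Real.norm_of_nonneg hδ.le])
  have := hmax _ (subset_closure h1)
  rw [inner_add_right, inner_smul_right, real_inner_self_eq_norm_sq, hw] at this
  linarith

lemma speed_le {γ γ' : ℝ → E2} (hd : ∀ t, HasDerivAt γ (γ' t) t) (hunit : ∀ t, ‖γ' t‖ = 1)
    (s t : ℝ) : ‖γ s - γ t‖ ≤ |s - t| := by
  have := Convex.norm_image_sub_le_of_norm_hasDerivWithin_le (s := univ) (f := γ) (f' := γ')
    (C := 1) (x := t) (y := s) (fun u _ => (hd u).hasDerivWithinAt) (fun u _ => (hunit u).le)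
    convex_univ trivial trivial
  simpa using this

/-- Uniform quadratic strict convexity of the boundary.  For nearby points this is `local_convex`; for
the others it follows by compactness from strict convexity. -/
lemma global_convex {Ω : Set E2} (hconv : Convex ℝ Ω) (hopen : IsOpen Ω)
    (hbdd : Bornology.IsBounded Ω) {γ γ' γ'' g n : ℝ → E2} {L c a : ℝ}
    (hbp : BoundaryParam Ω γ γ' γ'' L) (hn : NormalField Ω γ γ' n c)
    (hg : TangentDeriv γ' g L) (ha : 0 < a) (hlow : ∀ᵐ t, a ≤ ‖g t‖) :
    ∃ c₂ > 0, ∀ s t, c₂ * ‖γ s - γ t‖ ^ 2 ≤ ⟪n t, γ t - γ s⟫ := by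
  have hfr := hbp.mem_frontier
  have hcl : ∀ t, γ t ∈ closure Ω := fun t => (hfr t).1
  have hγc := hbp.continuous
  have hper' := hbp.tangent_periodic
  obtain ⟨η, hη, hη'⟩ := uniform_of_periodic hbp.1 hbp.2.2.1 hper'
    (show (0 : ℝ) < 1 / 2 by norm_num)
  obtain ⟨d, hd0, hclose⟩ := param_close hbp hη
  obtain ⟨hL, hd, hcont, hunit, hper, himg, -⟩ := hbp
  have hlocal : ∀ s t, ‖γ s - γ t‖ < d → a / 4 * ‖γ s - γ t‖ ^ 2 ≤ ⟪n t, γ t - γ s⟫ := by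
    intro s t hst
    obtain ⟨m, hm⟩ := hclose s t hst
    have h1 := local_convex hd hunit hcl hn hg ha hlow hη' hm
    have h2 := speed_le hd hunit (s + m * L) t
    rw [hper.int_mul m s] at h1 h2
    refine le_trans ?_ h1
    rw [← sq_abs (s + m * L - t)]
    gcongr
  -- a segment of the boundary starting at `γ t` contains points near `γ t`, against `hlocal`
  have hstrict : ∀ s t, γ s ≠ γ t → 0 < ⟪n t, γ t - γ s⟫ := by
    intro s t hne
    have hge : 0 ≤ ⟪n t, γ t - γ s⟫ := by
      rw [inner_sub_right]; linarith [hn.supp t _ (hcl s)]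
    refine lt_of_le_of_ne hge fun h0 => ?_
    have hpos : 0 < ‖γ s - γ t‖ := norm_pos_iff.mpr (sub_ne_zero.mpr hne)
    obtain ⟨θ, hθ0, hθ1, hθd⟩ : ∃ θ : ℝ, 0 < θ ∧ θ ≤ 1 ∧ θ * ‖γ s - γ t‖ < d := by
      refine ⟨min 1 (d / (2 * ‖γ s - γ t‖)), by positivity, min_le_left _ _, ?_⟩
      calc _ ≤ d / (2 * ‖γ s - γ t‖) * ‖γ s - γ t‖ := by gcongr; exact min_le_right _ _
        _ = d / 2 := by field_simp
        _ < d := by linarith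
    set z := γ t + θ • (γ s - γ t) with hz
    have hzcl : z ∈ closure Ω :=
      hconv.closure.add_smul_sub_mem (hcl t) (hcl s) ⟨hθ0.le, hθ1⟩
    have hzn : (⟪n t, z⟫ : ℝ) = ⟪n t, γ t⟫ := by
      rw [hz, inner_add_right, inner_smul_right, ← neg_sub (γ t) (γ s), inner_neg_right, ← h0]
      simp
    have hzfr : z ∈ frontier Ω := by
      rw [hopen.frontier_eq]
      refine ⟨hzcl, notMem_of_max hopen (hn.unit t) fun y hy => ?_⟩
      rw [hzn]; exact hn.supp t y hy
    rw [← himg] at hzfr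
    obtain ⟨u, -, hu⟩ := hzfr
    have hzt : ‖γ u - γ t‖ = θ * ‖γ s - γ t‖ := by
      rw [hu, hz, add_sub_cancel_left, norm_smul, Real.norm_of_nonneg hθ0.le]
    have h1 := hlocal u t (by rw [hzt]; exact hθd)
    rw [inner_sub_right, hu, hzn, sub_self, ← hu, hzt] at h1
    have : 0 < a / 4 * (θ * ‖γ s - γ t‖) ^ 2 := by positivity
    linarith
  have hnper : Function.Periodic n L := fun t => by
    have := hn.dist (t + L) t
    rw [hper' t, sub_self, norm_zero, norm_eq_zero] at this
    exact sub_eq_zero.mp this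
  have hnc : Continuous n := by
    rw [continuous_iff_continuousAt]
    intro t
    have := (hcont.tendsto t)
    rw [tendsto_iff_norm_sub_tendsto_zero] at this
    simp only [← hn.dist] at this
    exact tendsto_iff_norm_sub_tendsto_zero.mpr this
  set K : Set (ℝ × ℝ) := (Icc 0 L ×ˢ Icc 0 L) ∩ {p | d ≤ ‖γ p.1 - γ p.2‖} with hK
  have hKc : IsCompact K :=
    (isCompact_Icc.prod isCompact_Icc).inter_right
      (isClosed_le continuous_const (by fun_prop))
  obtain ⟨e, he, heK⟩ : ∃ e > 0, ∀ p ∈ K, e ≤ ⟪n p.2, γ p.2 - γ p.1⟫ := by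
    refine hKc.exists_forall_le' (Continuous.continuousOn (by fun_prop)) ?_
    rintro ⟨s, t⟩ ⟨-, h1⟩
    refine hstrict s t fun h => ?_
    simp [h] at h1
    linarith
  obtain ⟨D, hD0, hD⟩ : ∃ D > 0, ∀ s t, ‖γ s - γ t‖ ≤ D := by
    obtain ⟨D, hD⟩ := Metric.isBounded_iff.mp hbdd.closure
    refine ⟨max D 1, by positivity, fun s t => ?_⟩
    rw [← dist_eq_norm]
    exact (hD (hcl s) (hcl t)).trans (le_max_left _ _)
  refine ⟨min (a / 4) (e / D ^ 2), by positivity, fun s t => ?_⟩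
  by_cases h : ‖γ s - γ t‖ < d
  · refine le_trans ?_ (hlocal s t h)
    gcongr
    exact min_le_left _ _
  · push Not at h
    obtain ⟨i, hi⟩ := exists_shift hL s
    obtain ⟨j, hj⟩ := exists_shift hL t
    have h1 := heK (s + i * L, t + j * L) ⟨⟨⟨hi.1, hi.2.le⟩, ⟨hj.1, hj.2.le⟩⟩, by
      change d ≤ ‖γ (s + i * L) - γ (t + j * L)‖
      rw [hper.int_mul i s, hper.int_mul j t]; exact h⟩
    simp only at h1
    rw [hper.int_mul i s, hper.int_mul j t, hnper.int_mul j t] at h1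
    refine le_trans ?_ h1
    calc _ ≤ e / D ^ 2 * ‖γ s - γ t‖ ^ 2 := by gcongr; exact min_le_right _ _
      _ ≤ e / D ^ 2 * D ^ 2 := by gcongr; exact hD s t
      _ = e := by field_simp

/-- Adding the convexity inequalities at `s` and at `t` shows that the boundary point is a Lipschitz
function of the normal. -/
lemma lipschitz_of_convex {γ n : ℝ → E2} {c₂ : ℝ} (hc₂ : 0 < c₂)
    (h : ∀ s t, c₂ * ‖γ s - γ t‖ ^ 2 ≤ ⟪n t, γ t - γ s⟫) (s t : ℝ) :
    ‖γ s - γ t‖ ≤ 1 / (2 * c₂) * ‖n s - n t‖ := by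
  have h1 := h s t
  have h2 := h t s
  rw [norm_sub_rev] at h2
  have h3 : (⟪n t, γ t - γ s⟫ : ℝ) + ⟪n s, γ s - γ t⟫ = ⟪n s - n t, γ s - γ t⟫ := by
    rw [inner_sub_left, ← neg_sub (γ s) (γ t), inner_neg_right]; ring
  have h4 := real_inner_le_norm (n s - n t) (γ s - γ t)
  rcases (norm_nonneg (γ s - γ t)).eq_or_lt with h0 | h0
  · rw [← h0]; positivity
  · have h5 : 2 * c₂ * ‖γ s - γ t‖ ≤ ‖n s - n t‖ := by
      refine le_of_mul_le_mul_right ?_ h0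
      nlinarith
    rw [one_div, inv_mul_eq_div, le_div_iff₀ (by positivity)]
    linarith

/-! ### The modulus of continuity of the normal -/

lemma log_two_add_pos {T : ℝ} (hT : 0 ≤ T) : 0 < Real.log (2 + T) :=
  Real.log_pos (by linarith)

/-- Curvature above the threshold `T` is controlled by its `L log^p L` density. -/
lemma split_large {κ T p : ℝ} (hκ : 0 ≤ κ) (hT : 0 ≤ T) (hp : 0 ≤ p) :
    κ ≤ T + κ * Real.log (2 + κ) ^ p / Real.log (2 + T) ^ p := by
  have h1 := log_two_add_pos hT
  have h2 := log_two_add_pos hκ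
  rcases le_total κ T with h | h
  · have : 0 ≤ κ * Real.log (2 + κ) ^ p / Real.log (2 + T) ^ p := by positivity
    linarith
  · have h3 : Real.log (2 + T) ^ p ≤ Real.log (2 + κ) ^ p :=
      Real.rpow_le_rpow h1.le (Real.log_le_log (by linarith) (by linarith)) hp
    have h4 : κ ≤ κ * Real.log (2 + κ) ^ p / Real.log (2 + T) ^ p := by
      rw [le_div_iff₀ (by positivity)]
      gcongr
    linarith

/-- Modulus of continuity of the normal along the boundary: large curvature contributes at most
`I / log(2+T)^p`, curvature below `T` at most `T` times the arclength. -/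
lemma normal_modulus {Ω : Set E2} {γ γ' γ'' g n : ℝ → E2} {L c p : ℝ}
    (hbp : BoundaryParam Ω γ γ' γ'' L) (hn : NormalField Ω γ γ' n c)
    (hg : TangentDeriv γ' g L) (hp : 0 ≤ p)
    (hintegr : ∀ s t, IntervalIntegrable (fun t => ‖g t‖ * Real.log (2 + ‖g t‖) ^ p) volume s t) :
    ∃ C I : ℝ, 0 ≤ C ∧ 0 ≤ I ∧ ∀ T, 0 ≤ T → ∀ s t,
      ‖n s - n t‖ ≤ C * T * ‖γ s - γ t‖ + I / Real.log (2 + T) ^ p := by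
  obtain ⟨C, hC, harc⟩ := chord_arc hbp
  have hper' := hbp.tangent_periodic
  have hL := hbp.1
  set F : ℝ → ℝ := fun t => ‖g t‖ * Real.log (2 + ‖g t‖) ^ p with hF
  have hF0 : ∀ t, 0 ≤ F t := fun t => by
    have := log_two_add_pos (norm_nonneg (g t))
    simp only [hF]; positivity
  have hFper : Function.Periodic F L := fun t => by simp only [hF, hg.periodic t]
  have hFle : ∀ x y, x ≤ y → y ≤ x + L → ∫ u in x..y, F u ≤ ∫ u in (0:ℝ)..L, F u := by
    intro x y hxy hyL
    have h1 := hFper.intervalIntegral_add_eq x 0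
    rw [zero_add] at h1
    rw [← h1]
    exact intervalIntegral.integral_mono_interval le_rfl hxy hyL
      (Filter.Eventually.of_forall hF0) (hintegr _ _)
  have hbase : ∀ T, 0 ≤ T → ∀ x y, x ≤ y → y ≤ x + L →
      ‖γ' y - γ' x‖ ≤ T * (y - x) + (∫ u in (0:ℝ)..L, F u) / Real.log (2 + T) ^ p := by
    intro T hT x y hxy hyL
    have hlT := log_two_add_pos hT
    rw [hg.ftc x y]
    calc ‖∫ u in x..y, g u‖ ≤ ∫ u in x..y, ‖g u‖ := intervalIntegral.norm_integral_le_integral_norm hxy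
      _ ≤ ∫ u in x..y, (T + F u / Real.log (2 + T) ^ p) := by
          refine intervalIntegral.integral_mono_on hxy (hg.integrable x y).norm
            (intervalIntegrable_const.add ((hintegr x y).div_const _)) fun u _ => ?_
          exact split_large (norm_nonneg _) hT hp
      _ = T * (y - x) + (∫ u in x..y, F u) / Real.log (2 + T) ^ p := by
          rw [intervalIntegral.integral_add intervalIntegrable_const ((hintegr x y).div_const _),
            intervalIntegral.integral_const, intervalIntegral.integral_div, smul_eq_mul, mul_comm T]
      _ ≤ _ := by
          gcongr
          exact hFle x y hxy hyL
  refine ⟨C, ∫ u in (0:ℝ)..L, F u, hC.le,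
    intervalIntegral.integral_nonneg hL.le fun u _ => hF0 u, fun T hT s t => ?_⟩
  obtain ⟨m, hm1, hm2⟩ := harc s t
  rw [hn.dist, ← hper'.int_mul m s]
  have h3 : ‖γ' (s + m * L) - γ' t‖ ≤ T * |s + m * L - t| +
      (∫ u in (0:ℝ)..L, F u) / Real.log (2 + T) ^ p := by
    rcases le_total t (s + m * L) with h | h
    · rw [abs_of_nonneg (sub_nonneg.mpr h)] at hm1 ⊢
      exact hbase T hT _ _ h (by linarith)
    · rw [abs_of_nonpos (sub_nonpos.mpr h)] at hm1 ⊢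
      rw [norm_sub_rev, neg_sub]
      exact hbase T hT _ _ h (by linarith)
  refine h3.trans ?_
  refine add_le_add_left ?_ _
  calc T * |s + m * L - t| ≤ T * (C * ‖γ s - γ t‖) := by gcongr
    _ = _ := by ring

lemma log_rpow_le {p : ℝ} (hp : 0 < p) : ∃ C > 0, ∀ x, 1 ≤ x → Real.log (2 + x) ^ p ≤ C * x := by
  refine ⟨p ^ p * 3, by positivity, fun x hx => ?_⟩
  have h1 := Real.log_le_rpow_div (x := 2 + x) (by linarith) (inv_pos.mpr hp)
  rw [div_inv_eq_mul] at h1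
  have h2 := log_two_add_pos (show 0 ≤ x by linarith)
  calc Real.log (2 + x) ^ p ≤ ((2 + x) ^ p⁻¹ * p) ^ p := Real.rpow_le_rpow h2.le h1 hp.le
    _ = (2 + x) * p ^ p := by
        rw [Real.mul_rpow (by positivity) hp.le, ← Real.rpow_mul (by linarith),
          inv_mul_cancel₀ hp.ne', Real.rpow_one]
    _ ≤ p ^ p * 3 * x := by
        have : 0 < p ^ p := by positivity
        nlinarith

lemma log_cube_le {ℓ : ℝ} (hℓ : 1 ≤ ℓ) :
    Real.log (2 + ℓ ^ 3) ≤ 6 * Real.log (2 + Real.sqrt ℓ) := by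
  have h0 := Real.sqrt_nonneg ℓ
  have h1 : Real.sqrt ℓ ^ 2 = ℓ := Real.sq_sqrt (by linarith)
  have h2 : 2 + ℓ ^ 3 ≤ (2 + Real.sqrt ℓ) ^ 6 := by
    rw [show ℓ ^ 3 = Real.sqrt ℓ ^ 6 by
      conv_lhs => rw [← h1, ← pow_mul]]
    set x := Real.sqrt ℓ
    have : (2 + x) ^ 6 = 64 + 192 * x + 240 * x ^ 2 + 160 * x ^ 3 + 60 * x ^ 4 + 12 * x ^ 5 + x ^ 6 := by ring
    rw [this]
    have : 0 ≤ 192 * x + 240 * x ^ 2 + 160 * x ^ 3 + 60 * x ^ 4 + 12 * x ^ 5 := by positivity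
    linarith
  calc _ ≤ Real.log ((2 + Real.sqrt ℓ) ^ 6) := Real.log_le_log (by positivity) h2
    _ = _ := by rw [Real.log_pow]; norm_num

/-- With the threshold `T = √ℓ`, the modulus of continuity at scale `B / ℓ` is
`O(log(2+ℓ³)^{-p})`. -/
lemma modulus_at_scale {p C I B : ℝ} (hp : 0 < p) (hC : 0 ≤ C) (hI : 0 ≤ I) (hB : 0 ≤ B) :
    ∃ C', ∀ ℓ, 1 ≤ ℓ → C * Real.sqrt ℓ * (B / ℓ) + I / Real.log (2 + Real.sqrt ℓ) ^ p ≤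
      C' / Real.log (2 + ℓ ^ 3) ^ p := by
  obtain ⟨D, hD, hlog⟩ := log_rpow_le hp
  refine ⟨6 ^ p * (C * B * D + I), fun ℓ hℓ => ?_⟩
  have hs1 : 1 ≤ Real.sqrt ℓ := Real.one_le_sqrt.mpr hℓ
  have h1 := log_two_add_pos (show 0 ≤ Real.sqrt ℓ by linarith)
  have h3 := log_two_add_pos (show 0 ≤ ℓ ^ 3 by positivity)
  have h4 : Real.log (2 + ℓ ^ 3) ^ p ≤ 6 ^ p * Real.log (2 + Real.sqrt ℓ) ^ p := by
    rw [← Real.mul_rpow (by norm_num) h1.le]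
    exact Real.rpow_le_rpow h3.le (log_cube_le hℓ) hp.le
  have h5 := hlog _ hs1
  set Q := Real.log (2 + Real.sqrt ℓ) ^ p with hQ
  have hQ0 : 0 < Q := by positivity
  have h6 : C * Real.sqrt ℓ * (B / ℓ) ≤ C * B * D / Q := by
    rw [le_div_iff₀ hQ0]
    have h7 : Real.sqrt ℓ * Real.sqrt ℓ = ℓ := Real.mul_self_sqrt (by linarith)
    calc C * Real.sqrt ℓ * (B / ℓ) * Q ≤ C * Real.sqrt ℓ * (B / ℓ) * (D * Real.sqrt ℓ) := by
          gcongr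
      _ = C * B * D * (Real.sqrt ℓ * Real.sqrt ℓ / ℓ) := by ring
      _ = C * B * D := by rw [h7, div_self (by linarith), mul_one]
  calc _ ≤ C * B * D / Q + I / Q := by gcongr
    _ = (C * B * D + I) / Q := by ring
    _ ≤ _ := by
      rw [div_le_div_iff₀ hQ0 (by positivity)]
      have : 0 ≤ C * B * D + I := by positivity
      calc (C * B * D + I) * Real.log (2 + ℓ ^ 3) ^ p ≤ (C * B * D + I) * (6 ^ p * Q) := by gcongr
        _ = _ := by ring

/-! ### From the boundary curve to the lattice count -/

/-- Every unit vector is the outer normal at some boundary point, namely at a maximum point of the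
corresponding linear functional. -/
lemma exists_param_of_normal {Ω : Set E2} (hopen : IsOpen Ω) (hbdd : Bornology.IsBounded Ω)
    (h0 : (0 : E2) ∈ Ω) {γ γ' γ'' n : ℝ → E2} {L c : ℝ}
    (hbp : BoundaryParam Ω γ γ' γ'' L) (hn : NormalField Ω γ γ' n c)
    {ξ : E2} (hξ : ‖ξ‖ = 1) : ∃ t, n t = ξ := by
  obtain ⟨z, hz, hmax⟩ := hbdd.isCompact_closure.exists_isMaxOn ⟨0, subset_closure h0⟩
    (f := fun y => (⟪ξ, y⟫ : ℝ)) (by fun_prop)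
  have hmax' : ∀ y ∈ closure Ω, ⟪ξ, y⟫ ≤ ⟪ξ, z⟫ := fun y hy => hmax hy
  have hfr := hbp.mem_frontier
  obtain ⟨hL, hd, hcont, hunit, hper, himg, -⟩ := hbp
  have hzfr : z ∈ frontier Ω := by
    rw [hopen.frontier_eq]
    exact ⟨hz, notMem_of_max hopen hξ hmax'⟩
  rw [← himg] at hzfr
  obtain ⟨t, -, rfl⟩ := hzfr
  obtain ⟨δ, hδ, hball⟩ := Metric.nhds_basis_closedBall.mem_iff.mp (hopen.mem_nhds h0)
  have hpos : 0 < ⟪ξ, γ t⟫ := by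
    have := hmax' (δ • ξ) (subset_closure (hball (by
      rw [mem_closedBall_zero_iff, norm_smul, hξ, Real.norm_of_nonneg hδ.le, mul_one])))
    rw [inner_smul_right, real_inner_self_eq_norm_sq, hξ] at this
    linarith
  exact ⟨t, (normal_unique (hunit t) (hn.unit t) (hn.perp t) hξ
    (perp_of_max (hd t) fun s => hmax' _ (hfr s).1) (hn.c_pos.trans_le (hn.lower t)) hpos).symm⟩

lemma suppFn_eq {Ω : Set E2} {ξ x : E2} (hx : x ∈ closure Ω)
    (hmax : ∀ y ∈ closure Ω, ⟪ξ, y⟫ ≤ ⟪ξ, x⟫) {u : ℝ} (hu : 0 ≤ u) :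
    suppFn Ω (u • ξ) = u * ⟪x, ξ⟫ := by
  have hval : ∀ y : E2, (⟪y, u • ξ⟫ : ℝ) = u * ⟪ξ, y⟫ := fun y => by
    rw [inner_smul_right, real_inner_comm]
  have hne : Ω.Nonempty := closure_nonempty_iff.mp ⟨x, hx⟩
  rw [real_inner_comm, ← hval]
  refine IsLUB.csSup_eq ⟨?_, ?_⟩ (hne.image _)
  · rintro _ ⟨y, hy, rfl⟩
    simp only [hval]
    exact mul_le_mul_of_nonneg_left (hmax y (subset_closure hy)) hu
  · intro b hb
    refine closure_minimal (s := Ω) (t := {y | (⟪y, u • ξ⟫ : ℝ) ≤ b}) (fun y hy => ?_) ?_ hx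
    · exact hb ⟨y, hy, rfl⟩
    · exact isClosed_le (by fun_prop) (by fun_prop)

/-- The boundary point `X ξ` with outer normal `ξ` satisfies `SupportData` and computes the support
function, and conversely the normal is controlled by the boundary point, through the modulus of
continuity coming from the `L log^p L` bound on the curvature. -/
lemma exists_supportData {Ω : Set E2} (hconv : Convex ℝ Ω) (hopen : IsOpen Ω)
    (hbdd : Bornology.IsBounded Ω) (h0 : (0 : E2) ∈ Ω)
    {γ γ' γ'' : ℝ → E2} {L : ℝ} (hbp : BoundaryParam Ω γ γ' γ'' L)
    {a p : ℝ} (ha : 0 < a) (hp : 0 ≤ p)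
    (hlow : ∀ᵐ t ∂(volume.restrict (Set.Icc 0 L)), a ≤ ‖γ'' t‖)
    (hLlogL : IntegrableOn
      (fun t => ‖γ'' t‖ * Real.log (2 + ‖γ'' t‖) ^ p) (Set.Icc 0 L)) :
    ∃ X c M K, SupportData X c M K ∧
      (∀ ξ, ‖ξ‖ = 1 → ∀ u : ℝ, 0 ≤ u → suppFn Ω (u • ξ) = u * ⟪X ξ, ξ⟫) ∧
      ∃ C I : ℝ, 0 ≤ C ∧ 0 ≤ I ∧ ∀ T, 0 ≤ T → ∀ ξ η, ‖ξ‖ = 1 → ‖η‖ = 1 →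
        ‖ξ - η‖ ≤ C * T * ‖X ξ - X η‖ + I / Real.log (2 + T) ^ p := by
  obtain ⟨n, c, hn⟩ := exists_normalField hconv hopen h0 hbp
  obtain ⟨g, hg, hgae⟩ := hbp.exists_tangentDeriv
  have hL := hbp.1
  have hgr : g =ᵐ[volume.restrict (Icc 0 L)] γ'' :=
    hgae.filter_mono (ae_mono Measure.restrict_le_self)
  have hlow' : ∀ᵐ t, a ≤ ‖g t‖ := by
    refine ae_of_periodic hL (fun t => by rw [hg.periodic t]) ?_
    filter_upwards [hlow, hgr] with t h1 h2
    rw [h2]; exact h1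
  have hintegr : ∀ s t, IntervalIntegrable (fun t => ‖g t‖ * Real.log (2 + ‖g t‖) ^ p) volume s t := by
    refine Function.Periodic.intervalIntegrable₀ (T := L) (fun t => by simp only [hg.periodic t])
      hL.ne' ?_
    rw [intervalIntegrable_iff_integrableOn_Icc_of_le hL.le]
    refine Integrable.congr hLlogL ?_
    filter_upwards [hgr] with t ht
    rw [ht]
  obtain ⟨c₂, hc₂, hconv2⟩ := global_convex hconv hopen hbdd hbp hn hg ha hlow'
  have hlip := lipschitz_of_convex hc₂ hconv2
  obtain ⟨C, I, hC, hI, hmod⟩ := normal_modulus hbp hn hg hp hintegr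
  have hcl : ∀ t, γ t ∈ closure Ω := fun t => (hbp.mem_frontier t).1
  obtain ⟨M, hM⟩ := hbdd.closure.exists_norm_le
  have hsel : ∀ ξ : E2, ∃ t, ‖ξ‖ = 1 → n t = ξ := fun ξ => by
    by_cases h : ‖ξ‖ = 1
    · obtain ⟨t, ht⟩ := exists_param_of_normal hopen hbdd h0 hbp hn h
      exact ⟨t, fun _ => ht⟩
    · exact ⟨0, fun h' => absurd h' h⟩
  choose τ hτ using hsel
  refine ⟨fun ξ => γ (τ ξ), c, M, 1 / (2 * c₂), ⟨hn.c_pos, by positivity, ?_, ?_, ?_, ?_⟩, ?_,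
    C, I, hC, hI, ?_⟩
  · intro ξ η hξ hη
    have := hn.supp (τ ξ) _ (hcl (τ η))
    rw [hτ ξ hξ] at this
    rw [real_inner_comm ξ, real_inner_comm ξ]
    exact this
  · intro ξ hξ
    have := hn.lower (τ ξ)
    rw [hτ ξ hξ] at this
    rw [real_inner_comm]
    exact this
  · intro ξ hξ
    exact hM _ (hcl _)
  · intro ξ η hξ hη
    have := hlip (τ ξ) (τ η)
    rw [hτ ξ hξ, hτ η hη] at this
    exact this
  · intro ξ hξ u hu
    refine suppFn_eq (hcl _) (fun y hy => ?_) hu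
    have := hn.supp (τ ξ) y hy
    rw [hτ ξ hξ] at this
    exact this
  · intro T hT ξ η hξ hη
    have := hmod T hT (τ ξ) (τ η)
    rw [hτ ξ hξ, hτ η hη] at this
    exact this

/-- The lattice is symmetric, so both signs reduce to counting distinct points of `ℤ × ℤ`. -/
lemma exists_signed_lattice_map {s : ℝ} (hs : s ∈ ({1, -1} : Set ℝ)) :
    ∃ φ : (Fin 2 → ℤ) → ℤ × ℤ, Function.Injective φ ∧ ∀ k, zvec (φ k) = s • ek k := by
  obtain ⟨σ, hσ, hσs⟩ : ∃ σ : ℤ, σ ≠ 0 ∧ (σ : ℝ) = s := by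
    rcases hs with rfl | hs
    · exact ⟨1, by norm_num, by norm_num⟩
    · rw [mem_singleton_iff] at hs
      exact ⟨-1, by norm_num, by rw [hs]; norm_num⟩
  refine ⟨fun k => (σ * k 0, σ * k 1), fun k l hkl => ?_, fun k => ?_⟩
  · simp only [Prod.mk.injEq] at hkl
    have h0 := mul_left_cancel₀ hσ hkl.1
    have h1 := mul_left_cancel₀ hσ hkl.2
    funext i
    fin_cases i
    · exact h0
    · exact h1
  · ext i
    fin_cases i <;> simp [zvec, ek, ← hσs]

/-- Proposition 3.2: if `Ω` is a bounded open convex planar domain containing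
the origin, with `C¹` boundary, absolutely continuous unit tangent, curvature
`κ = ‖γ''‖ ≥ a > 0` a.e. and `κ ∈ L log^{2+ε} L(∂Ω)`, then
`S^±(r,h) ≤ C r [h^{−1} + (log(2+r))^{−1−ε/2}]` for all `r ≥ 2`, `h ≥ 1`. -/
theorem statement6 (Ω : Set E2) (hconv : Convex ℝ Ω) (hopen : IsOpen Ω)
    (hbdd : Bornology.IsBounded Ω) (h0 : (0 : E2) ∈ Ω)
    (γ γ' γ'' : ℝ → E2) (L : ℝ) (hbp : BoundaryParam Ω γ γ' γ'' L)
    (a ε : ℝ) (ha : 0 < a) (hε : 0 < ε)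
    (hlow : ∀ᵐ t ∂(volume.restrict (Set.Icc 0 L)), a ≤ ‖γ'' t‖)
    (hLlogL : IntegrableOn
      (fun t => ‖γ'' t‖ * Real.log (2 + ‖γ'' t‖) ^ ((2 : ℝ) + ε)) (Set.Icc 0 L)) :
    ∃ C : ℝ, ∀ s ∈ ({1, -1} : Set ℝ), ∀ r h : ℝ, 2 ≤ r → 1 ≤ h →
      (annCount Ω s r h : ℝ) ≤ C * r * (h⁻¹ + Real.log (2 + r) ^ (-(1 + ε / 2))) := by
  obtain ⟨X, c, M, K, hX, hsupp, C₁, I, hC₁, hI, hmod⟩ :=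
    exists_supportData hconv hopen hbdd h0 hbp ha (by positivity) hlow hLlogL
  set Hf : ℝ → ℝ := fun ℓ => Real.log (2 + ℓ ^ 3) ^ (1 + ε / 2) with hHf
  obtain ⟨C₀, hC₀⟩ : ∃ C₀, ∀ ℓ, 1 ≤ ℓ → Hf ℓ ≤ C₀ * ℓ := by
    obtain ⟨D, hD, hlog⟩ := log_rpow_le (show 0 < 1 + ε / 2 by positivity)
    refine ⟨6 ^ (1 + ε / 2) * D, fun ℓ hℓ => ?_⟩
    have hs1 : 1 ≤ Real.sqrt ℓ := Real.one_le_sqrt.mpr hℓ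
    have h3 := log_two_add_pos (show 0 ≤ ℓ ^ 3 by positivity)
    calc Hf ℓ ≤ (6 * Real.log (2 + Real.sqrt ℓ)) ^ (1 + ε / 2) :=
          Real.rpow_le_rpow h3.le (log_cube_le hℓ) (by positivity)
      _ = 6 ^ (1 + ε / 2) * Real.log (2 + Real.sqrt ℓ) ^ (1 + ε / 2) :=
          Real.mul_rpow (by norm_num) (log_two_add_pos (by positivity)).le
      _ ≤ 6 ^ (1 + ε / 2) * (D * Real.sqrt ℓ) := by gcongr; exact hlog _ hs1
      _ ≤ 6 ^ (1 + ε / 2) * (D * ℓ) := by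
          gcongr
          rw [Real.sqrt_le_left (by linarith)]
          nlinarith
      _ = _ := by ring
  have hmod' : ∀ B, ∃ C, ∀ ℓ, 1 ≤ ℓ → ∀ ξ η, ‖ξ‖ = 1 → ‖η‖ = 1 →
      ‖X ξ - X η‖ ≤ B / ℓ → ‖ξ - η‖ ≤ C / (Hf ℓ) ^ 2 := by
    intro B
    obtain ⟨C', hC'⟩ := modulus_at_scale (show 0 < 2 + ε by positivity) hC₁ hI (abs_nonneg B)
    refine ⟨C', fun ℓ hℓ ξ η hξ hη hXX => ?_⟩
    have h3 := log_two_add_pos (show 0 ≤ ℓ ^ 3 by positivity)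
    have hsq : Hf ℓ ^ 2 = Real.log (2 + ℓ ^ 3) ^ (2 + ε) := by
      simp only [hHf]
      rw [← Real.rpow_natCast, ← Real.rpow_mul h3.le]
      congr 1
      push_cast; ring
    rw [hsq]
    refine le_trans ?_ (hC' ℓ hℓ)
    refine (hmod (Real.sqrt ℓ) (Real.sqrt_nonneg _) ξ η hξ hη).trans ?_
    have : ‖X ξ - X η‖ ≤ |B| / ℓ := hXX.trans (by gcongr; exact le_abs_self B)
    gcongr
  obtain ⟨C, hC, hcount⟩ := annulus_count hX Hf C₀ hC₀ hmod'
  refine ⟨C, fun s hs r h hr hh => ?_⟩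
  obtain ⟨φ, hφ, hφz⟩ := exists_signed_lattice_map hs
  set ℓ : ℝ := r ^ ((1 : ℝ) / 3) with hℓ
  have hℓ1 : 1 ≤ ℓ := Real.one_le_rpow (by linarith) (by norm_num)
  have hℓ3 : ℓ ^ 3 = r := by
    rw [hℓ, ← Real.rpow_natCast, ← Real.rpow_mul (by linarith)]; norm_num
  have hHℓ : Hf ℓ = Real.log (2 + r) ^ (1 + ε / 2) := by simp only [hHf, hℓ3]
  have hlog1 : 1 ≤ Real.log (2 + r) := by
    rw [Real.le_log_iff_exp_le (by linarith)]
    linarith [Real.exp_one_lt_d9]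
  have hH1 : 1 ≤ Hf ℓ := by
    rw [hHℓ]; exact Real.one_le_rpow hlog1 (by positivity)
  have hinv : Real.log (2 + r) ^ (-(1 + ε / 2)) = (Hf ℓ)⁻¹ := by
    rw [hHℓ, Real.rpow_neg (by linarith)]
  have hsuppz : ∀ k, suppFn Ω (zvec k) = ‖zvec k‖ * ⟪X (zdir k), zdir k⟫ ∨ k = 0 := fun k => by
    by_cases hk : k = 0
    · exact Or.inr hk
    · left
      conv_lhs => rw [← smul_zdir hk]
      exact hsupp _ (norm_zdir hk) _ (norm_nonneg _)
  -- `h` may be lowered to `min h (Hf ℓ)`, since this only enlarges the annulus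
  have hmain : ∀ h' : ℝ, 1 ≤ h' → h' ≤ h → h' ≤ Hf ℓ → (annCount Ω s r h : ℝ) ≤ C * (r / h') := by
    intro h' h1 h2 h3
    unfold annCount
    set A : Set (Fin 2 → ℤ) := {k | |suppFn Ω (s • ek k) - r| ≤ 1 / h} with hA
    rcases A.finite_or_infinite with hfin | hinf
    · have hcard : Nat.card A = (hfin.toFinset.image φ).card := by
        rw [Finset.card_image_of_injective _ hφ]
        exact Nat.card_eq_card_finite_toFinset hfin
      rw [hcard, ← hℓ3]
      refine hcount ℓ h' hℓ1 h1 h3 _ fun q hq => ?_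
      obtain ⟨k, hk, rfl⟩ := Finset.mem_image.mp hq
      have hk' : |suppFn Ω (s • ek k) - r| ≤ 1 / h := hfin.mem_toFinset.mp hk
      rw [← hφz] at hk'
      have hle : 1 / h ≤ 1 / h' := one_div_le_one_div_of_le (by linarith) h2
      have hle1 : 1 / h ≤ 1 := by rw [div_le_one (by linarith)]; exact hh
      have hq0 : φ k ≠ 0 := by
        intro hq0
        have hz : zvec (φ k) = 0 := by
          rw [hq0]; ext i; fin_cases i <;> simp [zvec]
        have hs0 : suppFn Ω 0 = 0 := by
          simp [suppFn, Set.Nonempty.image_const ⟨0, h0⟩]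
        rw [hz, hs0, zero_sub, abs_neg, abs_of_nonneg (by linarith)] at hk'
        linarith
      refine ⟨hq0, ?_⟩
      rw [← (hsuppz (φ k)).resolve_right hq0, hℓ3]
      exact hk'.trans hle
    -- `Nat.card` of an infinite set is `0`; this case does not occur, but need not be excluded
    · have : Nat.card A = 0 := by
        have := hinf.to_subtype
        exact Nat.card_eq_zero_of_infinite
      rw [this, Nat.cast_zero]
      positivity
  rw [hinv]
  have hi1 : 0 < h⁻¹ := by positivity
  have hi2 : 0 < (Hf ℓ)⁻¹ := by positivity
  have hCr : 0 ≤ C * r := by positivity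
  rcases le_total h (Hf ℓ) with hle | hle
  · refine (hmain h hh le_rfl hle).trans ?_
    rw [div_eq_mul_inv, ← mul_assoc]
    gcongr; linarith
  · refine (hmain (Hf ℓ) hH1 hle le_rfl).trans ?_
    rw [div_eq_mul_inv, ← mul_assoc]
    gcongr; linarith

end
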